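/- Assume the stated hypotheses on Ω and u, and let a ∈ ∂Ω be a GBU point. Then u has the universal final blow-up profile in the normal direction at a: lim_{s→0⁺} s^β ∇u(a + s ν_a, T) = d_p ν_a (the values ∇u(·,T) being defined since u is C² in space on Ω up to time T). -/

import Mathlib

open Set Metric Filter RealInnerProductSpace

noncomputable section

set_option linter.unusedVariables false

/-- A set `Ω ⊆ ℝⁿ` has boundary of class `C²`: near each boundary point, `Ω` is the strict
sublevel set of a `C²` function with nonvanishing gradient (equivalently, after a rigid motion,
the boundary is locally the graph of a `C²` function with `Ω` strictly on one side). -/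
def IsC2Boundary {n : ℕ} (Ω : Set (EuclideanSpace ℝ (Fin n))) : Prop :=
  ∀ x ∈ frontier Ω, ∃ f : EuclideanSpace ℝ (Fin n) → ℝ, ∃ U ∈ nhds x,
    ContDiffOn ℝ 2 f U ∧ (∀ y ∈ U, fderiv ℝ f y ≠ 0) ∧
    U ∩ Ω = U ∩ {y | f y < 0} ∧ U ∩ frontier Ω = U ∩ {y | f y = 0}

/-- `φ` is twice differentiable at `x`, with gradient `v` and Laplacian `L` there. -/
def Jet {n : ℕ} (φ : EuclideanSpace ℝ (Fin n) → ℝ) (x v : EuclideanSpace ℝ (Fin n)) (L : ℝ) : Prop :=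
  ∃ (g : EuclideanSpace ℝ (Fin n) → EuclideanSpace ℝ (Fin n))
    (A : EuclideanSpace ℝ (Fin n) →L[ℝ] EuclideanSpace ℝ (Fin n)),
    (∀ᶠ y in nhds x, HasGradientAt φ (g y) y) ∧ HasFDerivAt g A x ∧ g x = v ∧
      LinearMap.trace ℝ (EuclideanSpace ℝ (Fin n))
        (A : EuclideanSpace ℝ (Fin n) →ₗ[ℝ] EuclideanSpace ℝ (Fin n)) = L

section JetCalculus

theorem gradAt_of {n : ℕ} {φ : EuclideanSpace ℝ (Fin n) → ℝ} {x v : EuclideanSpace ℝ (Fin n)}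
    {A : EuclideanSpace ℝ (Fin n) →L[ℝ] ℝ} (h : HasFDerivAt φ A x) (hA : ∀ z, A z = ⟪v, z⟫) :
    HasGradientAt φ v x := by
  rw [hasGradientAt_iff_hasFDerivAt]
  have : InnerProductSpace.toDual ℝ _ v = A := by ext z; simp [hA]
  rw [this]; exact h

theorem gradAt_fd {n : ℕ} {φ : EuclideanSpace ℝ (Fin n) → ℝ} {x v : EuclideanSpace ℝ (Fin n)}
    (h : HasGradientAt φ v x) : HasFDerivAt φ (innerSL ℝ v) x := by
  rw [hasGradientAt_iff_hasFDerivAt] at h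
  exact h

theorem gradAt_line {n : ℕ} {φ : EuclideanSpace ℝ (Fin n) → ℝ} {v e : EuclideanSpace ℝ (Fin n)}
    {γ : ℝ → EuclideanSpace ℝ (Fin n)} {τ : ℝ}
    (h : HasGradientAt φ v (γ τ)) (hγ : HasDerivAt γ e τ) :
    HasDerivAt (fun t => φ (γ t)) ⟪v, e⟫ τ := by
  have := (gradAt_fd h).comp_hasDerivAt τ hγ
  rw [innerSL_apply_apply] at this
  exact this

variable {n : ℕ} {φ ψ : EuclideanSpace ℝ (Fin n) → ℝ} {x v v' : EuclideanSpace ℝ (Fin n)} {L L' : ℝ}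

theorem Jet.hasGradientAt (h : Jet φ x v L) : HasGradientAt φ v x := by
  obtain ⟨g, A, h1, h2, h3, h4⟩ := h
  rw [← h3]; exact h1.self_of_nhds

theorem Jet.add (h : Jet φ x v L) (h' : Jet ψ x v' L') :
    Jet (fun y => φ y + ψ y) x (v + v') (L + L') := by
  obtain ⟨g, A, h1, h2, h3, h4⟩ := h
  obtain ⟨g', A', h1', h2', h3', h4'⟩ := h'
  refine ⟨fun y => g y + g' y, A + A', ?_, h2.add h2', by simp [h3, h3'], by
    simp [← h4, ← h4']⟩
  filter_upwards [h1, h1'] with y hy hy'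
  exact gradAt_of ((gradAt_fd hy).add (gradAt_fd hy')) (by simp [inner_add_left])

theorem Jet.const_mul (c : ℝ) (h : Jet φ x v L) :
    Jet (fun y => c * φ y) x (c • v) (c * L) := by
  obtain ⟨g, A, h1, h2, h3, h4⟩ := h
  refine ⟨fun y => c • g y, c • A, ?_, h2.const_smul c, by simp [h3], by
    simp [← h4]⟩
  filter_upwards [h1] with y hy
  exact gradAt_of ((gradAt_fd hy).const_mul c) (by simp [inner_smul_left])

theorem Jet.congr_val (h : Jet φ x v L) (hv : v = v') (hL : L = L') : Jet φ x v' L' := by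
  subst hv hL; exact h

theorem Jet.congr_fun (h : Jet φ x v L) (hf : ∀ y, ψ y = φ y) : Jet ψ x v L := by
  have : ψ = φ := funext hf
  rw [this]; exact h

theorem Jet.sub (h : Jet φ x v L) (h' : Jet ψ x v' L') :
    Jet (fun y => φ y - ψ y) x (v - v') (L - L') :=
  ((h.add (h'.const_mul (-1))).congr_val (by simp [sub_eq_add_neg]) (by ring)).congr_fun
    (fun y => by ring)

theorem Jet.const (c : ℝ) : Jet (fun _ => c) x 0 0 :=
  ⟨fun _ => 0, 0, Eventually.of_forall fun y => hasGradientAt_const y c,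
    hasFDerivAt_const _ _, rfl, by simp⟩

theorem Jet.translate (w : EuclideanSpace ℝ (Fin n)) (h : Jet φ (x + w) v L) :
    Jet (fun y => φ (y + w)) x v L := by
  obtain ⟨g, A, h1, h2, h3, h4⟩ := h
  have hc : Tendsto (fun y => y + w) (nhds x) (nhds (x + w)) := by
    apply Continuous.tendsto; fun_prop
  have hd : ∀ y, HasFDerivAt (fun y : EuclideanSpace ℝ (Fin n) => y + w)
    (ContinuousLinearMap.id ℝ _) y := fun y => (hasFDerivAt_id y).add_const w
  refine ⟨fun y => g (y + w), A, ?_, h2.comp x (hd x), h3, h4⟩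
  filter_upwards [hc.eventually h1] with y hy
  exact gradAt_of ((gradAt_fd hy).comp y (hd y)) (by simp)

theorem Jet.lin (ν a : EuclideanSpace ℝ (Fin n)) : Jet (fun y => ⟪ν, y - a⟫) x ν 0 := by
  refine ⟨fun _ => ν, 0, Eventually.of_forall fun y => ?_, hasFDerivAt_const _ _, rfl, by simp⟩
  have h := ((innerSL ℝ ν).hasFDerivAt (x := y - a)).comp y ((hasFDerivAt_id y).sub_const a)
  exact gradAt_of h (by simp)

theorem Jet.normSq (b : EuclideanSpace ℝ (Fin n)) :
    Jet (fun y => ‖y - b‖ ^ 2) x ((2 : ℝ) • (x - b)) (2 * n) := by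
  refine ⟨fun y => (2 : ℝ) • (y - b), (2 : ℝ) • ContinuousLinearMap.id ℝ _,
    Eventually.of_forall fun y => ?_,
    ((hasFDerivAt_id x).sub_const b).const_smul (2 : ℝ), rfl, by simp⟩
  exact gradAt_of ((hasFDerivAt_id y).sub_const b).norm_sq (fun z => by simp [inner_smul_left, inner_sub_left])

theorem Jet.comp {U U' : ℝ → ℝ} {U2 : ℝ} (h : Jet φ x v L)
    (hU : ∀ᶠ τ in nhds (φ x), HasDerivAt U (U' τ) τ) (hU' : HasDerivAt U' U2 (φ x)) :
    Jet (fun y => U (φ y)) x (U' (φ x) • v) (U2 * ‖v‖ ^ 2 + U' (φ x) * L) := by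
  have hg0 := h.hasGradientAt
  obtain ⟨g, A, h1, h2, h3, h4⟩ := h
  replace hg0 := gradAt_fd hg0
  have hd : HasFDerivAt (fun y => U' (φ y)) (U2 • innerSL ℝ v) x :=
    hU'.comp_hasFDerivAt x hg0
  refine ⟨fun y => U' (φ y) • g y, _, ?_, hd.smul h2, by simp [h3], ?_⟩
  · filter_upwards [h1, hg0.continuousAt.tendsto.eventually hU] with y hy hy'
    exact gradAt_of (hy'.comp_hasFDerivAt y (gradAt_fd hy)) (by simp [inner_smul_left])
  · simp only [ContinuousLinearMap.toLinearMap_add, ContinuousLinearMap.toLinearMap_smul, map_add, map_smul, h4,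
      smul_eq_mul]
    rw [add_comm]
    congr 1
    rw [LinearMap.trace_eq_sum_inner _ (EuclideanSpace.basisFun (Fin n) ℝ), h3]
    rw [← real_inner_self_eq_norm_sq, ← (EuclideanSpace.basisFun (Fin n) ℝ).sum_inner_mul_inner,
      Finset.mul_sum]
    refine Finset.sum_congr rfl fun i _ => ?_
    simp [inner_smul_right]
    ring

theorem Jet.reflect (R : EuclideanSpace ℝ (Fin n) →L[ℝ] EuclideanSpace ℝ (Fin n))
    (hs : ∀ y z, ⟪R y, z⟫ = ⟪y, R z⟫) (hR : ∀ y, R (R y) = y) (c : EuclideanSpace ℝ (Fin n))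
    (h : Jet φ (c + R x) v L) : Jet (fun y => φ (c + R y)) x (R v) L := by
  obtain ⟨g, A, h1, h2, h3, h4⟩ := h
  have hd : ∀ y, HasFDerivAt (fun y => c + R y) R y := fun y => R.hasFDerivAt.const_add c
  refine ⟨fun y => R (g (c + R y)), R.comp (A.comp R), ?_,
    R.hasFDerivAt.comp x (h2.comp x (hd x)), by simp [h3], ?_⟩
  · filter_upwards [(hd x).continuousAt.tendsto.eventually h1] with y hy
    exact gradAt_of ((gradAt_fd hy).comp y (hd y)) (by simp [hs])
  · rw [← h4]
    have e1 : ((R.comp (A.comp R) : EuclideanSpace ℝ (Fin n) →L[ℝ] EuclideanSpace ℝ (Fin n)) :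
        EuclideanSpace ℝ (Fin n) →ₗ[ℝ] EuclideanSpace ℝ (Fin n)) =
        (R : EuclideanSpace ℝ (Fin n) →ₗ[ℝ] EuclideanSpace ℝ (Fin n)) ∘ₗ
          ((A : EuclideanSpace ℝ (Fin n) →ₗ[ℝ] EuclideanSpace ℝ (Fin n)) ∘ₗ
          (R : EuclideanSpace ℝ (Fin n) →ₗ[ℝ] EuclideanSpace ℝ (Fin n))) := rfl
    rw [e1, LinearMap.trace_comp_comm']
    congr 1
    ext y : 1
    simp [hR]

theorem Jet.isLocalMax (h : Jet φ x v L) (hm : IsLocalMax φ x) : v = 0 ∧ L ≤ 0 := by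
  have hg0 := h.hasGradientAt
  obtain ⟨g, A, h1, h2, h3, h4⟩ := h
  have hv : v = 0 := by
    have := hm.hasFDerivAt_eq_zero (gradAt_fd hg0)
    have h5 : innerSL ℝ v v = 0 := by rw [this]; simp
    simpa using h5
  refine ⟨hv, ?_⟩
  rw [← h4, LinearMap.trace_eq_sum_inner _ (EuclideanSpace.basisFun (Fin n) ℝ)]
  apply Finset.sum_nonpos
  intro i _
  set e := (EuclideanSpace.basisFun (Fin n) ℝ) i
  by_contra hpos
  push Not at hpos
  have hl : ∀ τ : ℝ, HasDerivAt (fun τ : ℝ => x + τ • e) e τ := fun τ => by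
    simpa using ((hasDerivAt_id τ).smul_const e).const_add x
  have hl0 : Tendsto (fun τ : ℝ => x + τ • e) (nhds 0) (nhds x) := by
    have := (hl 0).continuousAt.tendsto
    simpa using this
  have hder : ∀ᶠ τ : ℝ in nhds 0, HasDerivAt (fun τ : ℝ => φ (x + τ • e)) ⟪g (x + τ • e), e⟫ τ := by
    filter_upwards [hl0.eventually h1] with τ hτ
    exact gradAt_line hτ (hl τ)
  have hdd : HasDerivAt (fun τ : ℝ => ⟪g (x + τ • e), e⟫) ⟪A e, e⟫ 0 := by
    have h2' : HasFDerivAt g A (x + (0 : ℝ) • e) := by simpa using h2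
    have := (h2'.comp_hasDerivAt (0 : ℝ) (hl 0)).inner ℝ (hasDerivAt_const (0 : ℝ) e)
    simpa using this
  have hde : deriv (fun τ : ℝ => φ (x + τ • e)) =ᶠ[nhds 0] fun τ : ℝ => ⟪g (x + τ • e), e⟫ := by
    filter_upwards [hder] with τ hτ using hτ.deriv
  have hd2 : deriv (deriv (fun τ : ℝ => φ (x + τ • e))) 0 = ⟪A e, e⟫ := by
    rw [hde.deriv_eq]; exact hdd.deriv
  have hpos' : 0 < ⟪A e, e⟫ := by rw [real_inner_comm]; exact hpos
  have hmin : IsLocalMin (fun τ : ℝ => φ (x + τ • e)) 0 := by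
    apply isLocalMin_of_deriv_deriv_pos
    · rw [hd2]; exact hpos'
    · rw [hder.self_of_nhds.deriv]; simp [h3, hv]
    · exact hder.self_of_nhds.continuousAt
  have hmax : ∀ᶠ τ : ℝ in nhds 0, φ (x + τ • e) ≤ φ x := hl0.eventually hm
  have hconst : (fun τ : ℝ => φ (x + τ • e)) =ᶠ[nhds 0] fun _ => φ x := by
    filter_upwards [hmax, hmin] with τ h1 h2
    simp at h2
    exact le_antisymm h1 h2
  have h5 : deriv (fun τ : ℝ => φ (x + τ • e)) =ᶠ[nhds 0] fun _ => (0 : ℝ) := by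
    filter_upwards [hconst.deriv] with τ hτ
    rw [hτ]; simp
  have h6 := h5.deriv_eq
  rw [hd2] at h6
  simp at h6
  linarith

/-- maximum principle, soft form -/
theorem max_principle_soft {K : Set (EuclideanSpace ℝ (Fin n))} (hK : IsCompact K)
    (hφ : ContinuousOn φ K) (c : ℝ) (h : ∀ x ∈ K, IsMaxOn φ K x → φ x ≤ c) :
    ∀ x ∈ K, φ x ≤ c := by
  intro x hx
  obtain ⟨y, hy, hmax⟩ := hK.exists_isMaxOn ⟨x, hx⟩ hφ
  exact (hmax hx).trans (h y hy hmax)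

/-- Interior gradient estimate for the Laplacian, in one direction. -/
theorem grad_est_dir {S N ρ : ℝ} (hρ : 0 < ρ) (hS : 0 ≤ S) (e : EuclideanSpace ℝ (Fin n)) (he : ‖e‖ = 1)
    (hφc : ContinuousOn φ (closedBall x ρ))
    (hS' : ∀ y ∈ closedBall x ρ, |φ y| ≤ S)
    (hN : ∀ y ∈ closedBall x ρ, ∃ v L, Jet φ y v L ∧ |L| < N) (hv : Jet φ x v L) :
    ⟪v, e⟫ ≤ n * S / ρ + N * ρ / 2 := by
  have hee : ⟪e, e⟫ = 1 := by rw [real_inner_self_eq_norm_sq, he]; norm_num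
  -- the reflection
  let R : EuclideanSpace ℝ (Fin n) →L[ℝ] EuclideanSpace ℝ (Fin n) :=
    ContinuousLinearMap.id ℝ _ - (2 : ℝ) • (InnerProductSpace.toDual ℝ _ e).smulRight e
  have hRa : ∀ y, R y = y - (2 * ⟪e, y⟫) • e := fun y => by simp [R, smul_smul]
  have hs : ∀ y z, ⟪R y, z⟫ = ⟪y, R z⟫ := fun y z => by
    simp only [hRa, inner_sub_left, inner_sub_right, inner_smul_left, inner_smul_right]
    simp [real_inner_comm]; ring
  have hRR : ∀ y, R (R y) = y := fun y => by
    rw [hRa (R y), hRa y]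
    simp only [inner_sub_right, inner_smul_right, hee]
    module
  have hRn : ∀ y, ‖R y‖ = ‖y‖ := fun y => by
    have : ‖R y‖ ^ 2 = ‖y‖ ^ 2 := by
      rw [← real_inner_self_eq_norm_sq, ← real_inner_self_eq_norm_sq, hs, hRR]
    exact (sq_eq_sq₀ (norm_nonneg _) (norm_nonneg _)).1 this
  set D : ℝ := n * S / ρ ^ 2 + N / 2 with hD
  have hN0 : 0 < N := by
    obtain ⟨v, L, _, h⟩ := hN x (by simp [hρ.le])
    exact (abs_nonneg _).trans_lt h
  have hD0 : 0 ≤ D := by positivity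
  let Kset : Set (EuclideanSpace ℝ (Fin n)) := closedBall 0 ρ ∩ {y | 0 ≤ ⟪e, y⟫}
  have hcl : IsClosed {y : EuclideanSpace ℝ (Fin n) | 0 ≤ ⟪e, y⟫} :=
    isClosed_le continuous_const (by fun_prop)
  have hK : IsCompact Kset := (isCompact_closedBall _ _).inter_right hcl
  have hb1 : ∀ y ∈ closedBall (0 : EuclideanSpace ℝ (Fin n)) ρ, x + y ∈ closedBall x ρ := fun y hy => by
    simpa using hy
  have hb2 : ∀ y ∈ closedBall (0 : EuclideanSpace ℝ (Fin n)) ρ, x + R y ∈ closedBall x ρ := fun y hy => by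
    simpa [hRn] using hy
  have key : ∀ y ∈ Kset, (1 / 2) * (φ (x + y) - φ (x + R y)) -
      (S / ρ ^ 2 * ‖y - 0‖ ^ 2 + (D * ρ * ⟪e, y - 0⟫ - D * ⟪e, y - 0⟫ ^ 2)) ≤ 0 := by
    apply max_principle_soft hK
    · have hm1 : MapsTo (fun y => x + y) Kset (closedBall x ρ) := fun y hy => hb1 y hy.1
      have hm2 : MapsTo (fun y => x + R y) Kset (closedBall x ρ) := fun y hy => hb2 y hy.1
      have c1 : ContinuousOn (fun y => φ (x + y)) Kset :=
        hφc.comp (f := fun y => x + y) (by fun_prop) hm1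
      have c2 : ContinuousOn (fun y => φ (x + R y)) Kset :=
        hφc.comp (f := fun y => x + R y) (by fun_prop) hm2
      fun_prop
    · intro y hy hmax
      simp only [sub_zero]
      have hy2 : 0 ≤ ⟪e, y⟫ := hy.2
      have hyn : ‖y‖ ≤ ρ := by simpa using hy.1
      have hey : ⟪e, y⟫ ≤ ρ := by
        have := real_inner_le_norm e y
        rw [he, one_mul] at this; linarith
      have hSy : 0 ≤ S / ρ ^ 2 * ‖y‖ ^ 2 := by positivity
      have hDD : 0 ≤ D * ρ * ⟪e, y⟫ - D * ⟪e, y⟫ ^ 2 := by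
        have : 0 ≤ D * ⟪e, y⟫ * (ρ - ⟪e, y⟫) :=
          mul_nonneg (mul_nonneg hD0 hy2) (by linarith)
        nlinarith
      rcases hy2.eq_or_lt with h0 | h0
      · have : R y = y := by rw [hRa, ← h0]; simp
        rw [this]; linarith
      rcases hyn.eq_or_lt with h1 | h1
      · have e1 := hS' _ (hb1 y hy.1)
        have e2 := hS' _ (hb2 y hy.1)
        have e3 : S / ρ ^ 2 * ‖y‖ ^ 2 = S := by rw [h1]; field_simp
        have := abs_le.1 e1
        have := abs_le.1 e2
        linarith
      exfalso
      have hnb : Kset ∈ nhds y := by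
        apply inter_mem
        · exact mem_of_superset (isOpen_ball.mem_nhds (by simpa using h1)) ball_subset_closedBall
        · exact mem_of_superset ((isOpen_lt (f := fun _ => (0 : ℝ))
            (g := fun z : EuclideanSpace ℝ (Fin n) => ⟪e, z⟫) continuous_const
            (by fun_prop)).mem_nhds h0) (fun z (hz : 0 < ⟪e, z⟫) => show 0 ≤ ⟪e, z⟫ from hz.le)
      have hloc := hmax.isLocalMax hnb
      obtain ⟨v1, L1, J1, hL1⟩ := hN _ (hb1 y hy.1)
      obtain ⟨v2, L2, J2, hL2⟩ := hN _ (hb2 y hy.1)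
      have J1' : Jet (fun z => φ (x + z)) y v1 L1 :=
        (Jet.translate x (J1.congr_fun (fun _ => rfl) |> (by rw [add_comm]; exact ·))).congr_fun
          (fun z => by rw [add_comm])
      have J2' := Jet.reflect R hs hRR x J2
      have J3 : Jet (fun y => ⟪e, y - 0⟫) y e 0 := Jet.lin e 0
      have J4 := J3.comp (U := fun τ => D * ρ * τ - D * τ ^ 2) (U' := fun τ => D * ρ - D * (2 * τ))
        (U2 := - D * 2)
        (Eventually.of_forall fun τ => by
          have := ((hasDerivAt_id τ).const_mul (D * ρ)).sub (((hasDerivAt_id τ).pow 2).const_mul D)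
          refine this.congr_deriv ?_
          simp)
        (by
          have := (((hasDerivAt_id ⟪e, y - 0⟫).const_mul 2).const_mul D).const_sub (D * ρ)
          refine this.congr_deriv ?_
          simp)
      have JJ := ((J1'.sub J2').const_mul (1 / 2)).sub
        (((Jet.normSq 0).const_mul (S / ρ ^ 2)).add J4)
      have := (JJ.isLocalMax hloc).2
      rw [he] at this
      have hDe : D * 2 = S / ρ ^ 2 * (2 * n) + N := by rw [hD]; ring
      have := abs_lt.1 hL1
      have := abs_lt.1 hL2
      linarith
  have hgr := hv.hasGradientAt
  have hl : ∀ c : ℝ, HasDerivAt (fun τ : ℝ => x + (c * τ) • e) (c • e) 0 := fun c => by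
    simpa using (((hasDerivAt_id (0 : ℝ)).const_mul c).smul_const e).const_add x
  have hgr' : ∀ c : ℝ, HasGradientAt φ v (x + (c * 0) • e) := by
    simpa using hgr
  have hd1 := gradAt_line (hgr' 1) (hl 1)
  have hd2 := gradAt_line (hgr' (-1)) (hl (-1))
  have hlin : HasDerivAt (fun τ : ℝ => (S / ρ ^ 2 * τ ^ 2 + (D * ρ * τ - D * τ ^ 2)) -
      (1 / 2) * (φ (x + (1 * τ) • e) - φ (x + (-1 * τ) • e))) (D * ρ - ⟪v, e⟫) 0 := by
    have := ((((hasDerivAt_id (0 : ℝ)).pow 2).const_mul (S / ρ ^ 2)).add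
      (((hasDerivAt_id (0 : ℝ)).const_mul (D * ρ)).sub
        (((hasDerivAt_id (0 : ℝ)).pow 2).const_mul D))).sub ((hd1.sub hd2).const_mul (1 / 2))
    refine this.congr_deriv ?_
    simp
    ring
  have hnn : ∀ τ ∈ Ioo 0 ρ, 0 ≤ (S / ρ ^ 2 * τ ^ 2 + (D * ρ * τ - D * τ ^ 2)) -
      (1 / 2) * (φ (x + (1 * τ) • e) - φ (x + (-1 * τ) • e)) := by
    intro τ hτ
    have hin : τ • e ∈ Kset := by
      refine ⟨?_, ?_⟩
      · simp [norm_smul, he, abs_of_pos hτ.1, hτ.2.le]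
      · show 0 ≤ ⟪e, τ • e⟫
        rw [inner_smul_right, hee]; linarith [hτ.1]
    have := key _ hin
    have hRe : R (τ • e) = (-1 * τ) • e := by
      rw [hRa]; simp only [inner_smul_right, hee]; module
    rw [hRe] at this
    simp only [sub_zero, inner_smul_right, hee, norm_smul, he, mul_one, Real.norm_eq_abs, sq_abs] at this
    simp only [one_mul]
    linarith
  have hpos : 0 ≤ D * ρ - ⟪v, e⟫ := by
    have ht := hlin.tendsto_slope_zero_right
    refine ge_of_tendsto ht ?_
    filter_upwards [Ioo_mem_nhdsGT hρ] with τ hτ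
    have := hnn τ hτ
    simp only [zero_add, smul_eq_mul]
    apply mul_nonneg (inv_nonneg.2 hτ.1.le)
    simpa using this
  have : D * ρ = n * S / ρ + N * ρ / 2 := by rw [hD]; field_simp
  linarith

theorem grad_est {S N ρ : ℝ} (hρ : 0 < ρ) (hS : 0 ≤ S)
    (hφc : ContinuousOn φ (closedBall x ρ))
    (hS' : ∀ y ∈ closedBall x ρ, |φ y| ≤ S)
    (hN : ∀ y ∈ closedBall x ρ, ∃ v L, Jet φ y v L ∧ |L| < N) (hv : Jet φ x v L) :
    ‖v‖ ≤ n * S / ρ + N * ρ / 2 := by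
  by_cases h0 : v = 0
  · rw [h0, norm_zero]
    have hN0 : 0 < N := by
      obtain ⟨v, L, _, h⟩ := hN x (by simp [hρ.le])
      exact (abs_nonneg _).trans_lt h
    positivity
  have hn := norm_pos_iff.2 h0
  have := grad_est_dir hρ hS (‖v‖⁻¹ • v) (by simp [norm_smul, hn.ne']) hφc hS' hN hv
  rw [inner_smul_right, real_inner_self_eq_norm_sq] at this
  have h2 : ‖v‖⁻¹ * ‖v‖ ^ 2 = ‖v‖ := by field_simp
  linarith

end JetCalculus

section Geometry

variable {n : ℕ} {Ω : Set (EuclideanSpace ℝ (Fin n))}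

theorem subset_of_disjoint_frontier (hΩ : IsOpen Ω) {S : Set (EuclideanSpace ℝ (Fin n))}
    (hS : IsPreconnected S) {x : EuclideanSpace ℝ (Fin n)} (hx : x ∈ S) (hxΩ : x ∈ Ω)
    (hd : ∀ y ∈ S, y ∉ frontier Ω) : S ⊆ Ω := by
  rw [isPreconnected_iff_subset_of_disjoint] at hS
  have h1 : S ⊆ Ω ∪ (closure Ω)ᶜ := by
    intro y hy
    by_cases h : y ∈ Ω
    · exact Or.inl h
    · right
      intro hc
      exact hd y hy (by rw [hΩ.frontier_eq]; exact ⟨hc, h⟩)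
  have h2 : S ∩ (Ω ∩ (closure Ω)ᶜ) = ∅ := by
    ext y
    simp only [mem_inter_iff, mem_compl_iff, mem_empty_iff_false, iff_false]
    rintro ⟨_, h, h'⟩
    exact h' (subset_closure h)
  rcases hS _ _ hΩ isClosed_closure.isOpen_compl h1 h2 with h | h
  · exact h
  · exact absurd (subset_closure hxΩ) (h hx)

theorem ball_infDist_subset (hΩ : IsOpen Ω) {x : EuclideanSpace ℝ (Fin n)} (hxΩ : x ∈ Ω) :
    ball x (infDist x (frontier Ω)) ⊆ Ω := by
  intro y hy
  have hpos : 0 < infDist x (frontier Ω) := dist_nonneg.trans_lt hy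
  refine subset_of_disjoint_frontier hΩ (convex_ball x (infDist x (frontier Ω))).isPreconnected
    (mem_ball_self hpos) hxΩ ?_ hy
  intro z hz hzf
  have := infDist_le_dist_of_mem (x := x) hzf
  rw [mem_ball, dist_comm] at hz
  linarith

theorem exists_frontier_segment (hΩ : IsOpen Ω) {x y : EuclideanSpace ℝ (Fin n)} (hx : x ∈ Ω)
    (hy : y ∉ Ω) : infDist x (frontier Ω) ≤ dist x y := by
  by_contra h
  push Not at h
  exact hy (ball_infDist_subset hΩ hx (by rwa [mem_ball, dist_comm]))

theorem infDist_pos_of_mem (hΩ : IsOpen Ω) {a : EuclideanSpace ℝ (Fin n)} (ha : a ∈ frontier Ω)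
    {x : EuclideanSpace ℝ (Fin n)} (hx : x ∈ Ω) :
    0 < infDist x (frontier Ω) := by
  rw [← isClosed_frontier.notMem_iff_infDist_pos ⟨a, ha⟩]
  intro h
  rw [hΩ.frontier_eq] at h
  exact h.2 hx

theorem exists_defining (hΩ : IsOpen Ω) (hC2 : IsC2Boundary Ω) {a ν : EuclideanSpace ℝ (Fin n)}
    (ha : a ∈ frontier Ω) (hν : ‖ν‖ = 1) {δ₀ : ℝ} (hδ₀ : 0 < δ₀)
    (hn : ∀ s ∈ Ioo (0 : ℝ) δ₀, a + s • ν ∈ Ω ∧ infDist (a + s • ν) (frontier Ω) = s) :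
    ∃ r : EuclideanSpace ℝ (Fin n) → ℝ, ∃ Lm : ℝ,
      (∀ᶠ x in nhds a, (x ∈ Ω ↔ 0 < r x) ∧ (x ∈ frontier Ω ↔ r x = 0)) ∧
      HasGradientAt r ν a ∧
      (∀ ε > 0, ∀ᶠ x in nhds a, ∃ v L, Jet r x v L ∧ ‖v - ν‖ ≤ ε ∧ |L| ≤ Lm) := by
  obtain ⟨f, U, hU, hf, hf', h1, h2⟩ := hC2 a ha
  have hfa : ContDiffAt ℝ 2 f a := hf.contDiffAt hU
  have hF : ContDiffAt ℝ 1 (fderiv ℝ f) a := hfa.fderiv_right (by norm_num)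
  let g : EuclideanSpace ℝ (Fin n) → EuclideanSpace ℝ (Fin n) :=
    fun y => (InnerProductSpace.toDual ℝ (EuclideanSpace ℝ (Fin n))).symm (fderiv ℝ f y)
  have hg : ContDiffAt ℝ 1 g a :=
    ((InnerProductSpace.toDual ℝ (EuclideanSpace ℝ (Fin n))).symm.toContinuousLinearEquiv :
      _ ≃L[ℝ] EuclideanSpace ℝ (Fin n)).contDiff.contDiffAt.comp a hF
  have hgg : ∀ y, DifferentiableAt ℝ f y → HasGradientAt f (g y) y := fun y hy =>
    gradAt_of hy.hasFDerivAt (fun z => by simp [g])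
  have hfd : ∀ᶠ y in nhds a, DifferentiableAt ℝ f y := by
    filter_upwards [hfa.eventually (by simp)] with y hy
    exact hy.differentiableAt (by norm_num)
  have hfa0 : f a = 0 := by
    have : a ∈ U ∩ frontier Ω := ⟨mem_of_mem_nhds hU, ha⟩
    rw [h2] at this; exact this.2
  have hNa := hgg a hfd.self_of_nhds
  -- direction of the gradient
  have hdir : ∀ v, 0 < ⟪ν, v⟫ → ⟪g a, v⟫ ≤ 0 := by
    intro v hv
    have hl : HasDerivAt (fun τ : ℝ => a + τ • v) v 0 := by
      simpa using ((hasDerivAt_id (0 : ℝ)).smul_const v).const_add a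
    have hNa' : HasGradientAt f (g a) (a + (0 : ℝ) • v) := by simpa using hNa
    have hd := gradAt_line hNa' hl
    have ht := hd.tendsto_slope_zero_right
    refine le_of_tendsto ht ?_
    have hct : Tendsto (fun τ : ℝ => a + τ • v) (nhds 0) (nhds a) := by
      have := hl.continuousAt.tendsto; simpa using this
    have hs0 : δ₀ / 2 ∈ Ioo (0 : ℝ) δ₀ := ⟨by linarith, by linarith⟩
    obtain ⟨hin, hdist⟩ := hn _ hs0
    have hsub := ball_infDist_subset hΩ hin
    rw [hdist] at hsub
    have hpos : 0 < δ₀ * ⟪ν, v⟫ / (‖v‖ ^ 2 + 1) := by positivity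
    filter_upwards [mem_nhdsWithin_of_mem_nhds (hct.eventually hU), Ioo_mem_nhdsGT hpos] with τ hτU hτ
    have hmem : a + τ • v ∈ Ω := by
      apply hsub
      rw [mem_ball, dist_eq_norm]
      have e1 : ‖a + τ • v - (a + (δ₀ / 2) • ν)‖ ^ 2 =
          τ ^ 2 * ‖v‖ ^ 2 - δ₀ * τ * ⟪ν, v⟫ + (δ₀ / 2) ^ 2 := by
        have : a + τ • v - (a + (δ₀ / 2) • ν) = τ • v - (δ₀ / 2) • ν := by abel
        rw [this, norm_sub_sq_real, norm_smul, norm_smul, hν, inner_smul_left, inner_smul_right,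
          real_inner_comm]
        simp only [Real.norm_eq_abs, mul_pow, sq_abs, conj_trivial]
        ring
      have e2 : τ * (‖v‖ ^ 2 + 1) < δ₀ * ⟪ν, v⟫ := by
        have := hτ.2
        rwa [lt_div_iff₀ (by positivity)] at this
      apply lt_of_pow_lt_pow_left₀ 2 (by positivity)
      rw [e1]
      nlinarith [hτ.1]
    have : a + τ • v ∈ U ∩ Ω := ⟨hτU, hmem⟩
    rw [h1] at this
    have hneg : f (a + τ • v) < 0 := this.2
    simp only [zero_add, zero_smul, add_zero, hfa0, sub_zero, smul_eq_mul]
    exact mul_nonpos_of_nonneg_of_nonpos (inv_nonneg.2 hτ.1.le) hneg.le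
  have hνν : ⟪ν, ν⟫ = 1 := by rw [real_inner_self_eq_norm_sq, hν]; norm_num
  have hperp : g a = ⟪ν, g a⟫ • ν := by
    set w := g a - ⟪ν, g a⟫ • ν with hw
    have hw1 : ⟪ν, w⟫ = 0 := by rw [hw, inner_sub_right, inner_smul_right, hνν]; ring
    have hw2 : ⟪g a, w⟫ = ‖w‖ ^ 2 := by
      have : g a = w + ⟪ν, g a⟫ • ν := by rw [hw]; abel
      rw [this, inner_add_left, inner_smul_left, hw1, real_inner_self_eq_norm_sq]; simp
    have hall : ∀ t : ℝ, t * ‖w‖ ^ 2 + ⟪ν, g a⟫ ≤ 0 := fun t => by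
      have := hdir (t • w + ν) (by rw [inner_add_right, inner_smul_right, hw1, hνν]; norm_num)
      rwa [inner_add_right, inner_smul_right, hw2, real_inner_comm] at this
    have hw0 : w = 0 := by
      by_contra hne
      have hp : 0 < ‖w‖ ^ 2 := by have := norm_pos_iff.2 hne; positivity
      have := hall ((1 - ⟪ν, g a⟫) / ‖w‖ ^ 2)
      rw [div_mul_cancel₀ _ hp.ne'] at this
      linarith
    exact sub_eq_zero.1 hw0
  have hga0 : g a ≠ 0 := by
    intro h0
    apply hf' a (mem_of_mem_nhds hU)
    simpa [g] using h0
  have hk : ⟪ν, g a⟫ < 0 := by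
    have h3 := hdir ν (by rw [hνν]; norm_num)
    rw [real_inner_comm] at h3
    refine lt_of_le_of_ne h3 ?_
    intro h4
    rw [h4, zero_smul] at hperp
    exact hga0 hperp
  set k : ℝ := -(⟪ν, g a⟫)⁻¹ with hkdef
  have hkpos : 0 < k := by rw [hkdef, neg_pos]; exact inv_lt_zero.2 hk
  have hkg : -k • g a = ν := by
    rw [hperp, smul_smul, hkdef]
    simp [inner_smul_right, hνν, hk.ne]
  -- traces
  let tr : EuclideanSpace ℝ (Fin n) → ℝ := fun y => LinearMap.trace ℝ (EuclideanSpace ℝ (Fin n))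
      (fderiv ℝ g y : EuclideanSpace ℝ (Fin n) →ₗ[ℝ] EuclideanSpace ℝ (Fin n))
  have hjet : ∀ᶠ y in nhds a, Jet (fun x => -k * f x) y (-k • g y) (-k * tr y) := by
    filter_upwards [eventually_eventually_nhds.2 hfd, hg.eventually (by simp)] with y hy hy2
    apply Jet.const_mul
    exact ⟨g, fderiv ℝ g y, by filter_upwards [hy] with z hz using hgg z hz,
      (hy2.differentiableAt (by norm_num)).hasFDerivAt, rfl, rfl⟩
  have htrc : ContinuousAt tr a := by
    have hc : ContinuousAt (fderiv ℝ g) a := (hg.fderiv_right (m := 0) (by norm_num)).continuousAt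
    let T : (EuclideanSpace ℝ (Fin n) →L[ℝ] EuclideanSpace ℝ (Fin n)) →ₗ[ℝ] ℝ :=
      { toFun := fun A => LinearMap.trace ℝ (EuclideanSpace ℝ (Fin n))
          (A : EuclideanSpace ℝ (Fin n) →ₗ[ℝ] EuclideanSpace ℝ (Fin n))
        map_add' := fun A B => by simp
        map_smul' := fun c A => by simp }
    exact (T.continuous_of_finiteDimensional.continuousAt (x := fderiv ℝ g a)).comp hc
  refine ⟨fun x => -k * f x, k * (|tr a| + 1), ?_, ?_, ?_⟩
  · filter_upwards [hU] with x hx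
    constructor
    · have : x ∈ U ∩ Ω ↔ x ∈ U ∩ {y | f y < 0} := by rw [h1]
      simp only [mem_inter_iff, hx, true_and, mem_setOf_eq] at this
      rw [this]
      constructor
      · intro h; nlinarith
      · intro h; by_contra h'; push Not at h'; nlinarith
    · have : x ∈ U ∩ frontier Ω ↔ x ∈ U ∩ {y | f y = 0} := by rw [h2]
      simp only [mem_inter_iff, hx, true_and, mem_setOf_eq] at this
      rw [this]
      simp [hkpos.ne']
  · have := hjet.self_of_nhds.hasGradientAt
    rwa [hkg] at this
  · intro ε hε
    have hgc : ContinuousAt (fun y => ‖-k • g y - ν‖) a := by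
      have := hg.continuousAt
      fun_prop
    have e1 : ∀ᶠ y in nhds a, ‖-k • g y - ν‖ < ε :=
      hgc.eventually_lt continuousAt_const (by simpa [hkg] using hε)
    have e2 : ∀ᶠ y in nhds a, |tr y| < |tr a| + 1 :=
      htrc.abs.eventually_lt continuousAt_const (by linarith)
    filter_upwards [hjet, e1, e2] with y h1 h2 h3
    refine ⟨_, _, h1, h2.le, ?_⟩
    rw [abs_mul, abs_neg, abs_of_pos hkpos]
    exact mul_le_mul_of_nonneg_left h3.le hkpos.le

/-- Flatness of the boundary near `a`. -/
def FlatAt (Ω : Set (EuclideanSpace ℝ (Fin n))) (a ν : EuclideanSpace ℝ (Fin n)) : Prop :=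
  ∀ ε > 0, ∃ ρ > 0, ∀ x, ‖x - a‖ ≤ ρ →
    (x ∉ Ω → ⟪ν, x - a⟫ ≤ ε * ‖x - a‖) ∧
    (x ∈ closure Ω → |infDist x (frontier Ω) - ⟪ν, x - a⟫| ≤ ε * ‖x - a‖)

theorem abs_inner_le_of_unit {ν x : EuclideanSpace ℝ (Fin n)} (hν : ‖ν‖ = 1) : |⟪ν, x⟫| ≤ ‖x‖ := by
  have := abs_real_inner_le_norm ν x
  rwa [hν, one_mul] at this

theorem flatAt_of_defining (hΩ : IsOpen Ω) (hΩb : Bornology.IsBounded Ω)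
    {a ν : EuclideanSpace ℝ (Fin n)} (ha : a ∈ frontier Ω) (hν : ‖ν‖ = 1)
    {r : EuclideanSpace ℝ (Fin n) → ℝ}
    (hr : ∀ᶠ x in nhds a, (x ∈ Ω ↔ 0 < r x) ∧ (x ∈ frontier Ω ↔ r x = 0))
    (hg : HasGradientAt r ν a) : FlatAt Ω a ν := by
  have hνν : ⟪ν, ν⟫ = 1 := by rw [real_inner_self_eq_norm_sq, hν]; norm_num
  have hra : r a = 0 := (hr.self_of_nhds.2).1 ha
  have hcone : ∀ ε > 0, ∃ ρ > 0, ∀ x, ‖x - a‖ < ρ →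
      (x ∉ Ω → ⟪ν, x - a⟫ ≤ ε * ‖x - a‖) ∧ (x ∈ closure Ω → -(ε * ‖x - a‖) ≤ ⟪ν, x - a⟫) := by
    intro ε hε
    have h1 := (gradAt_fd hg).isLittleO.def hε
    obtain ⟨ρ, hρ, h⟩ := Metric.eventually_nhds_iff.1 (h1.and hr)
    refine ⟨ρ, hρ, fun x hx => ?_⟩
    obtain ⟨h2, h3, h4⟩ := h (by rwa [dist_eq_norm])
    rw [hra, sub_zero, innerSL_apply_apply, Real.norm_eq_abs, abs_le] at h2
    constructor
    · intro hxn
      rw [h3] at hxn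
      linarith
    · intro hxc
      have : 0 ≤ r x := by
        by_cases hxo : x ∈ Ω
        · exact (h3.1 hxo).le
        · exact (h4.1 (by rw [hΩ.frontier_eq]; exact ⟨hxc, hxo⟩)).ge
      linarith
  have hcpt : IsCompact (frontier Ω) :=
    Metric.isCompact_of_isClosed_isBounded isClosed_frontier
      (hΩb.closure.subset frontier_subset_closure)
  intro ε' hε'
  set ε := min (ε' / 4) (1 / 4) with hεdef
  have hε : 0 < ε := by positivity
  have hε1 : ε ≤ ε' / 4 := min_le_left _ _
  have hε2 : ε ≤ 1 / 4 := min_le_right _ _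
  obtain ⟨ρ, hρ, h⟩ := hcone ε hε
  refine ⟨ρ / 4, by positivity, fun x hx => ?_⟩
  have hN := norm_nonneg (x - a)
  have hεN : ε * ‖x - a‖ ≤ ε' / 4 * ‖x - a‖ := mul_le_mul_of_nonneg_right hε1 hN
  have hεN0 : 0 ≤ ε * ‖x - a‖ := by positivity
  refine ⟨fun hxn => by have := (h x (by linarith)).1 hxn; linarith, fun hxc => ?_⟩
  have hl := (h x (by linarith)).2 hxc
  rw [abs_le]
  constructor
  · obtain ⟨q, hq, hdq⟩ := hcpt.exists_infDist_eq_dist ⟨a, ha⟩ x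
    have h1 : dist x q ≤ ‖x - a‖ := by
      rw [← hdq, ← dist_eq_norm]; exact infDist_le_dist_of_mem ha
    have h2 : ‖q - a‖ ≤ 2 * ‖x - a‖ := by
      have : ‖q - a‖ ≤ ‖q - x‖ + ‖x - a‖ := norm_sub_le_norm_sub_add_norm_sub q x a
      rw [dist_eq_norm, norm_sub_rev] at h1
      linarith
    have hqn : q ∉ Ω := by rw [hΩ.frontier_eq] at hq; exact hq.2
    have h3 := (h q (by linarith)).1 hqn
    have h4 : ⟪ν, x - a⟫ = ⟪ν, x - q⟫ + ⟪ν, q - a⟫ := by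
      rw [← inner_add_right]; congr 1; abel
    have h5 := le_trans (le_abs_self _) (abs_inner_le_of_unit (x := x - q) hν)
    rw [hdq, dist_eq_norm]
    nlinarith
  · by_cases hxo : x ∈ Ω
    · set m := ⟪ν, x - a⟫ + 4 * (ε * ‖x - a‖) with hm
      have hmx := le_trans (le_abs_self _) (abs_inner_le_of_unit (x := x - a) hν)
      have hm0 : 0 ≤ m := by linarith
      have hm2 : m ≤ 2 * ‖x - a‖ := by nlinarith
      by_cases hx0 : ‖x - a‖ = 0
      · exfalso
        have : x = a := sub_eq_zero.1 (norm_eq_zero.1 hx0)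
        rw [this] at hxo
        rw [hΩ.frontier_eq] at ha
        exact ha.2 hxo
      have hxpos : 0 < ‖x - a‖ := lt_of_le_of_ne hN (Ne.symm hx0)
      have hy : ‖x - m • ν - a‖ ≤ 3 * ‖x - a‖ := by
        have e1 : x - m • ν - a = (x - a) - m • ν := by abel
        rw [e1]
        have := norm_sub_le (x - a) (m • ν)
        rw [norm_smul, hν, Real.norm_eq_abs, abs_of_nonneg hm0] at this
        linarith
      have hyn : x - m • ν ∉ Ω := by
        intro hyo
        have h6 := (h (x - m • ν) (by linarith)).2 (subset_closure hyo)
        have e2 : ⟪ν, x - m • ν - a⟫ = ⟪ν, x - a⟫ - m := by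
          have e1 : x - m • ν - a = (x - a) - m • ν := by abel
          rw [e1, inner_sub_right, inner_smul_right, hνν, mul_one]
        rw [e2, hm] at h6
        nlinarith [mul_pos hε hxpos]
      have h7 := exists_frontier_segment hΩ hxo hyn
      rw [dist_eq_norm, sub_sub_cancel, norm_smul, hν, Real.norm_eq_abs, abs_of_nonneg hm0] at h7
      linarith
    · have hxf : x ∈ frontier Ω := by rw [hΩ.frontier_eq]; exact ⟨hxc, hxo⟩
      rw [infDist_zero_of_mem hxf]
      linarith

end Geometry

section Scaling

variable {n : ℕ}

/-- A solution `w` of the (inhomogeneous, stationary) equation with bounded right-hand side,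
with the a priori bounds near the boundary. -/
structure Sol (Ω : Set (EuclideanSpace ℝ (Fin n))) (p β M C : ℝ) (w : EuclideanSpace ℝ (Fin n) → ℝ)
    (g : EuclideanSpace ℝ (Fin n) → EuclideanSpace ℝ (Fin n)) : Prop where
  cont : ContinuousOn w (closure Ω)
  zero : ∀ x ∈ frontier Ω, w x = 0
  bd : ∀ x ∈ closure Ω, infDist x (frontier Ω) ≤ 1 → |w x| ≤ C * infDist x (frontier Ω) ^ (1 - β)
  gr : ∀ x ∈ Ω, infDist x (frontier Ω) ≤ 1 → ‖g x‖ ≤ C * infDist x (frontier Ω) ^ (-β)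
  jet : ∀ x ∈ Ω, ∃ L, Jet w x (g x) L ∧ |L + ‖g x‖ ^ p| ≤ M

/-- The rescaled situation: `D` is close to a half space in the ball of radius `R`. -/
structure Near (ν : EuclideanSpace ℝ (Fin n)) (p β C R ε : ℝ) (D Dc : Set (EuclideanSpace ℝ (Fin n)))
    (w : EuclideanSpace ℝ (Fin n) → ℝ)
    (g : EuclideanSpace ℝ (Fin n) → EuclideanSpace ℝ (Fin n)) : Prop where
  op : IsOpen D
  cl : IsClosed Dc
  sub : D ⊆ Dc
  cont : ContinuousOn w Dc
  zero : ∀ x ∈ Dc, x ∉ D → w x = 0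
  low : ∀ x ∈ Dc, ‖x‖ ≤ R → -ε ≤ ⟪ν, x⟫
  out : ∀ x, x ∉ D → ‖x‖ ≤ R → ⟪ν, x⟫ ≤ ε
  bd : ∀ x ∈ Dc, ‖x‖ ≤ R → |w x| ≤ C * (|⟪ν, x⟫| + ε) ^ (1 - β)
  gr : ∀ x ∈ D, ‖x‖ ≤ R → 0 < ⟪ν, x⟫ → 2 * ε ≤ ⟪ν, x⟫ → ‖g x‖ ≤ C * ⟪ν, x⟫ ^ (-β)
  jet : ∀ x ∈ D, ∃ L, Jet w x (g x) L ∧ |L + ‖g x‖ ^ p| ≤ ε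

theorem Near.mono {ν : EuclideanSpace ℝ (Fin n)} {p β C R ε : ℝ} {D Dc : Set (EuclideanSpace ℝ (Fin n))}
    {w : EuclideanSpace ℝ (Fin n) → ℝ} {g : EuclideanSpace ℝ (Fin n) → EuclideanSpace ℝ (Fin n)}
    (h : Near ν p β C R ε D Dc w g) (hC : 0 ≤ C) (hβ : β < 1) (hε : 0 < ε) {R' ε' : ℝ} (hR : R' ≤ R)
    (hε' : ε ≤ ε') : Near ν p β C R' ε' D Dc w g where
  op := h.op
  cl := h.cl
  sub := h.sub
  cont := h.cont
  zero := h.zero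
  low := fun x hx hn => by linarith [h.low x hx (hn.trans hR)]
  out := fun x hx hn => by linarith [h.out x hx (hn.trans hR)]
  bd := fun x hx hn => (h.bd x hx (hn.trans hR)).trans (by
    apply mul_le_mul_of_nonneg_left _ hC
    apply Real.rpow_le_rpow (by positivity) (by linarith) (by linarith))
  gr := fun x hx hn h0 h2 => h.gr x hx (hn.trans hR) h0 (by linarith)
  jet := fun x hx => by
    obtain ⟨L, hL, h2⟩ := h.jet x hx
    exact ⟨L, hL, h2.trans hε'⟩

theorem Jet.scale {φ : EuclideanSpace ℝ (Fin n) → ℝ} {x v a : EuclideanSpace ℝ (Fin n)} {L s : ℝ}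
    (h : Jet φ (a + s • x) v L) : Jet (fun y => φ (a + s • y)) x (s • v) (s ^ 2 * L) := by
  obtain ⟨g, A, h1, h2, h3, h4⟩ := h
  have hd : ∀ y, HasFDerivAt (fun y : EuclideanSpace ℝ (Fin n) => a + s • y)
    (s • ContinuousLinearMap.id ℝ _) y := fun y => ((hasFDerivAt_id y).const_smul s).const_add a
  refine ⟨fun y => s • g (a + s • y), s • A.comp (s • ContinuousLinearMap.id ℝ _), ?_,
    (h2.comp x (hd x)).const_smul s, by simp [h3], ?_⟩
  · filter_upwards [(hd x).continuousAt.tendsto.eventually h1] with y hy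
    exact gradAt_of ((gradAt_fd hy).comp y (hd y)) (by simp [inner_smul_left])
  · rw [← h4]
    simp
    ring

variable {Ω : Set (EuclideanSpace ℝ (Fin n))} {a ν : EuclideanSpace ℝ (Fin n)}

theorem near_of_sol (hΩ : IsOpen Ω) (hfl : FlatAt Ω a ν) (hν : ‖ν‖ = 1) {p β : ℝ} (hp : 2 < p)
    (hβ : 0 < β) (hβ1 : β < 1) (hβp : β * (p - 1) = 1) {M C : ℝ} (hM : 0 ≤ M) (hC : 1 ≤ C) {R ε : ℝ}
    (hR : 0 < R) (hε : 0 < ε) : ∃ s1 > 0, ∀ s, 0 < s → s < s1 → ∀ w g, Sol Ω p β M C w g →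
      Near ν p β (2 * C) R ε ((fun y => a + s • y) ⁻¹' Ω) ((fun y => a + s • y) ⁻¹' (closure Ω))
        (fun y => s ^ (-(1 - β)) * w (a + s • y)) (fun y => s ^ β • g (a + s • y)) := by
  obtain ⟨ρ, hρ, hflat⟩ := hfl (ε / R) (by positivity)
  have hM1 : 0 < ε / (M + 1) := by positivity
  refine ⟨min (ρ / R) (min (1 / (R + ε)) (min 1 (ε / (M + 1)))), by positivity, ?_⟩
  intro s hs hs1 w g hS
  obtain ⟨h1, h2, h3, h4⟩ : s < ρ / R ∧ s < 1 / (R + ε) ∧ s < 1 ∧ s < ε / (M + 1) := by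
    simpa [lt_min_iff] using hs1
  rw [lt_div_iff₀ hR] at h1
  rw [lt_div_iff₀ (by positivity)] at h2
  rw [lt_div_iff₀ (by positivity)] at h4
  have hcont : Continuous (fun y : EuclideanSpace ℝ (Fin n) => a + s • y) := by fun_prop
  have key : ∀ y : EuclideanSpace ℝ (Fin n), ‖y‖ ≤ R →
      (a + s • y ∉ Ω → ⟪ν, y⟫ ≤ ε) ∧ (a + s • y ∈ closure Ω →
        |infDist (a + s • y) (frontier Ω) - s * ⟪ν, y⟫| ≤ ε * s) := by
    intro y hy
    have hn : ‖a + s • y - a‖ = s * ‖y‖ := by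
      rw [add_sub_cancel_left, norm_smul, Real.norm_of_nonneg hs.le]
    have hb : ε / R * (s * ‖y‖) ≤ ε * s := by
      calc ε / R * (s * ‖y‖) ≤ ε / R * (s * R) := by gcongr
        _ = ε * s := by field_simp
    have hle : s * ‖y‖ ≤ ρ := by nlinarith
    obtain ⟨f1, f2⟩ := hflat (a + s • y) (by rw [hn]; exact hle)
    rw [hn, add_sub_cancel_left, inner_smul_right] at f1 f2
    refine ⟨fun h => ?_, fun h => (f2 h).trans hb⟩
    have := (f1 h).trans hb
    exact le_of_mul_le_mul_left (by linarith) hs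
  have key2 : ∀ y : EuclideanSpace ℝ (Fin n), ‖y‖ ≤ R → a + s • y ∈ closure Ω →
      infDist (a + s • y) (frontier Ω) ≤ 1 := by
    intro y hy hyc
    have h5 := abs_le.1 ((key y hy).2 hyc)
    have h6 := abs_le.1 (abs_inner_le_of_unit hν (x := y))
    nlinarith
  refine ⟨hΩ.preimage hcont, isClosed_closure.preimage hcont, preimage_mono subset_closure, ?_, ?_, ?_, ?_,
    ?_, ?_, ?_⟩
  · exact continuousOn_const.mul (hS.cont.comp hcont.continuousOn (fun x hx => hx))
  · intro x hx hx'
    have : a + s • x ∈ frontier Ω := by rw [hΩ.frontier_eq]; exact ⟨hx, hx'⟩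
    simp [hS.zero _ this]
  · intro x hx hxR
    have h5 := abs_le.1 ((key x hxR).2 hx)
    have h6 : 0 ≤ infDist (a + s • x) (frontier Ω) := infDist_nonneg
    have : -(ε * s) ≤ s * ⟪ν, x⟫ := by linarith
    nlinarith
  · intro x hx hxR
    exact (key x hxR).1 hx
  · intro x hx hxR
    have h5 := abs_le.1 ((key x hxR).2 hx)
    have h6 := hS.bd _ hx (key2 x hxR hx)
    have h7 : infDist (a + s • x) (frontier Ω) ≤ s * (|⟪ν, x⟫| + ε) := by
      have := le_abs_self ⟪ν, x⟫
      nlinarith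
    have h8 : infDist (a + s • x) (frontier Ω) ^ (1 - β) ≤ s ^ (1 - β) * (|⟪ν, x⟫| + ε) ^ (1 - β) := by
      rw [← Real.mul_rpow hs.le (by positivity)]
      exact Real.rpow_le_rpow infDist_nonneg h7 (by linarith)
    rw [abs_mul, abs_of_pos (Real.rpow_pos_of_pos hs _), Real.rpow_neg hs.le]
    have hsq : 0 < s ^ (1 - β) := Real.rpow_pos_of_pos hs _
    rw [inv_mul_le_iff₀ hsq]
    have h9 : 0 ≤ (|⟪ν, x⟫| + ε) ^ (1 - β) := by positivity
    calc |w (a + s • x)| ≤ C * (s ^ (1 - β) * (|⟪ν, x⟫| + ε) ^ (1 - β)) :=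
          h6.trans (by gcongr)
      _ ≤ _ := by
        have : 0 ≤ C * (s ^ (1 - β) * (|⟪ν, x⟫| + ε) ^ (1 - β)) := by positivity
        linarith
  · intro x hx hxR h0 h2ε
    have hxc : a + s • x ∈ closure Ω := subset_closure hx
    have h5 := abs_le.1 ((key x hxR).2 hxc)
    have h6 := hS.gr _ hx (key2 x hxR hxc)
    have h7 : s * (⟪ν, x⟫ / 2) ≤ infDist (a + s • x) (frontier Ω) := by nlinarith
    have h8 : infDist (a + s • x) (frontier Ω) ^ (-β) ≤ s ^ (-β) * (⟪ν, x⟫ / 2) ^ (-β) := by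
      rw [← Real.mul_rpow hs.le (by positivity)]
      exact Real.rpow_le_rpow_of_nonpos (by positivity) h7 (by linarith)
    have h10 : (⟪ν, x⟫ / 2) ^ (-β) ≤ 2 * ⟪ν, x⟫ ^ (-β) := by
      rw [Real.div_rpow h0.le (by norm_num), Real.rpow_neg (by norm_num : (0:ℝ) ≤ 2), div_inv_eq_mul, mul_comm]
      gcongr
      calc (2:ℝ) ^ β ≤ 2 ^ (1:ℝ) := Real.rpow_le_rpow_of_exponent_le (by norm_num) hβ1.le
        _ = 2 := by simp
    rw [norm_smul, Real.norm_of_nonneg (by positivity)]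
    have hss : s ^ β * s ^ (-β) = 1 := by rw [← Real.rpow_add hs]; simp
    have hsb : 0 < s ^ (-β) := by positivity
    calc s ^ β * ‖g (a + s • x)‖ ≤ s ^ β * (C * (s ^ (-β) * (2 * ⟪ν, x⟫ ^ (-β)))) := by
          gcongr
          refine h6.trans ?_
          gcongr
          refine h8.trans ?_
          gcongr
      _ = (s ^ β * s ^ (-β)) * (2 * C * ⟪ν, x⟫ ^ (-β)) := by ring
      _ = _ := by rw [hss, one_mul]
  · intro x hx
    obtain ⟨L, hJ, hL⟩ := hS.jet _ hx
    have hJ2 := (hJ.scale).const_mul (s ^ (-(1 - β)))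
    refine ⟨_, hJ2.congr_val ?_ rfl, ?_⟩
    · rw [smul_smul]
      congr 1
      rw [show s ^ (-(1 - β)) * s = s ^ (-(1 - β)) * s ^ (1:ℝ) by simp, ← Real.rpow_add hs]
      congr 1; ring
    · have e1 : s ^ (-(1 - β)) * (s ^ 2 * L) = s ^ (1 + β) * L := by
        rw [← mul_assoc, show s ^ (-(1 - β)) * s ^ 2 = s ^ (-(1 - β)) * s ^ (2:ℝ) by simp, ← Real.rpow_add hs]
        congr 2; ring
      have e2 : ‖s ^ β • g (a + s • x)‖ ^ p = s ^ (1 + β) * ‖g (a + s • x)‖ ^ p := by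
        rw [norm_smul, Real.norm_of_nonneg (by positivity), Real.mul_rpow (by positivity) (by positivity),
          ← Real.rpow_mul hs.le]
        congr 2; linarith
      rw [e1, e2, ← mul_add, abs_mul, abs_of_pos (by positivity)]
      have hs2 : s ^ (1 + β) ≤ s := by
        calc s ^ (1 + β) ≤ s ^ (1:ℝ) := Real.rpow_le_rpow_of_exponent_ge hs h3.le (by linarith)
          _ = s := by simp
      calc s ^ (1 + β) * |L + ‖g (a + s • x)‖ ^ p| ≤ s * M := by gcongr
        _ ≤ ε := by nlinarith

end Scaling

section Tangential

variable {n : ℕ} {ν : EuclideanSpace ℝ (Fin n)}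

theorem norm_jensen {p θ : ℝ} (hp : 1 ≤ p) (hθ : 0 < θ) (hθ1 : θ ≤ 1)
    (v z : EuclideanSpace ℝ (Fin n)) :
    ‖(1 - θ) • v + z‖ ^ p ≤ (1 - θ) * ‖v‖ ^ p + θ * (‖z‖ / θ) ^ p := by
  have h1 : ‖(1 - θ) • v + z‖ ≤ (1 - θ) * ‖v‖ + θ * (‖z‖ / θ) := by
    refine (norm_add_le _ _).trans ?_
    rw [norm_smul, Real.norm_of_nonneg (by linarith)]
    apply le_of_eq
    field_simp
  refine (Real.rpow_le_rpow (norm_nonneg _) h1 (by linarith)).trans ?_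
  have := (convexOn_rpow hp).2 (norm_nonneg v : ‖v‖ ∈ Ici (0:ℝ))
    (show 0 ≤ ‖z‖ / θ by positivity) (sub_nonneg.2 hθ1) hθ.le (by ring)
  simpa using this

theorem neg_one_sub_mul_le {θ w B : ℝ} (h0 : 0 ≤ θ) (h1 : θ ≤ 1) (hw : -B ≤ w) (hB : 0 ≤ B) :
    -((1 - θ) * w) ≤ B := by
  have e1 : (1 - θ) * (-B) ≤ (1 - θ) * w := mul_le_mul_of_nonneg_left hw (by linarith)
  have e2 : 0 ≤ θ * B := mul_nonneg h0 hB
  linarith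

theorem near_seg {p β C R ε : ℝ} {D Dc : Set (EuclideanSpace ℝ (Fin n))}
    {w : EuclideanSpace ℝ (Fin n) → ℝ} {g : EuclideanSpace ℝ (Fin n) → EuclideanSpace ℝ (Fin n)}
    (h : Near ν p β C R ε D Dc w g) (hε : 0 < ε) {x y : EuclideanSpace ℝ (Fin n)} {c H : ℝ}
    (hH : 0 < H) (hHε : 2 * ε ≤ H)
    (hx : ‖x‖ ≤ R) (hy : ‖y‖ ≤ R) (hc : ⟪ν, x⟫ = H) (hc' : ⟪ν, y⟫ = H) :
    |w y - w x| ≤ C * H ^ (-β) * ‖y - x‖ := by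
  let S : Set (EuclideanSpace ℝ (Fin n)) := {z | ‖z‖ ≤ R ∧ ⟪ν, z⟫ = H}
  have hS : Convex ℝ S := by
    have e : S = closedBall 0 R ∩ {z | (innerSL ℝ ν) z = H} := by
      ext z; simp [S]
    rw [e]
    exact (convex_closedBall _ _).inter (convex_hyperplane (innerSL ℝ ν).isLinear H)
  have hD : ∀ z ∈ S, z ∈ D := by
    intro z hz
    by_contra hzD
    have := h.out z hzD hz.1
    linarith [hz.2]
  have := hS.norm_image_sub_le_of_norm_hasFDerivWithin_le (f := w) (f' := fun z => innerSL ℝ (g z))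
    (C := C * H ^ (-β)) (x := x) (y := y)
    (fun z hz => by
      obtain ⟨L, hJ, _⟩ := h.jet z (hD z hz)
      exact (gradAt_fd hJ.hasGradientAt).hasFDerivWithinAt)
    (fun z hz => by
      rw [innerSL_apply_norm]
      have := h.gr z (hD z hz) hz.1 (by rw [hz.2]; exact hH) (by rw [hz.2]; exact hHε)
      rwa [hz.2] at this) ⟨hx, hc⟩ ⟨hy, hc'⟩
  exact this

theorem tan_params (hn : 1 ≤ n) {p β : ℝ} (hp : 2 < p)
    (hβ : 0 < β) (hβ1 : β < 1) {C K η : ℝ} (hC : 1 ≤ C) (hη : 0 < η) (hK : 0 ≤ K) :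
    ∃ H θ R' κ ε, 1 ≤ H ∧ 0 < θ ∧ θ ≤ 1 ∧ H ≤ R' ∧ 0 < κ ∧ 0 < ε ∧ ε ≤ 1 / 2 ∧
      C * H ^ (-β) * K ≤ η / 4 ∧ θ * (C * (H + 3)) ≤ η / 4 ∧ 2 * C * (H + 1) ≤ κ * R' ^ 2 ∧
      2 * n * κ * H ^ 2 ≤ η / 4 ∧ θ * (6 * n * κ * R' / θ) ^ p ≤ κ / 2 ∧ ε < κ / 2 ∧
      2 * C * (2 * ε) ^ (1 - β) ≤ η / 4 := by
  have hn0 : (1:ℝ) ≤ n := by exact_mod_cast hn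
  have t1 : Tendsto (fun H : ℝ => C * H ^ (-β) * K) atTop (nhds (C * 0 * K)) :=
    ((tendsto_rpow_neg_atTop hβ).const_mul C).mul_const K
  have e1 : ∀ᶠ H : ℝ in atTop, C * H ^ (-β) * K < η / 4 :=
    t1.eventually_lt_const (by simp; positivity)
  obtain ⟨H, h1, hH⟩ := (e1.and (eventually_ge_atTop 1)).exists
  set θ := min 1 (η / 4 / (C * (H + 3))) with hθ
  have hθ0 : 0 < θ := by positivity
  have hθ1 : θ ≤ 1 := min_le_left _ _
  have hθ2 : θ * (C * (H + 3)) ≤ η / 4 := by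
    rw [← le_div_iff₀ (by positivity)]; exact min_le_right _ _
  set A := 2 * C * (H + 1) with hA
  have hA0 : 0 < A := by positivity
  have t2 : Tendsto (fun r : ℝ => 2 * n * A * H ^ 2 * r ^ (-2:ℝ)) atTop (nhds (2 * n * A * H ^ 2 * 0)) :=
    (tendsto_rpow_neg_atTop (by norm_num)).const_mul _
  have t3 : Tendsto (fun r : ℝ => θ * (6 * n * A / θ) ^ p * r ^ (-(p - 2))) atTop
      (nhds (θ * (6 * n * A / θ) ^ p * 0)) :=
    (tendsto_rpow_neg_atTop (by linarith)).const_mul _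
  have e2 := t2.eventually_lt_const (u := η / 4) (by simp; positivity)
  have e3 := t3.eventually_lt_const (u := A / 2) (by simp; positivity)
  obtain ⟨R', ⟨h2, h3⟩, h4⟩ := ((e2.and e3).and (eventually_ge_atTop H)).exists
  have hR0 : 0 < R' := by linarith
  set κ := A / R' ^ 2 with hκ
  have hκ0 : 0 < κ := by positivity
  have t4 : Tendsto (fun ε : ℝ => 2 * C * (2 * ε) ^ (1 - β)) (nhds 0) (nhds (2 * C * (2 * 0) ^ (1 - β))) := by
    have : ContinuousAt (fun ε : ℝ => 2 * C * (2 * ε) ^ (1 - β)) 0 := by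
      have : ContinuousAt (fun ε : ℝ => (2 * ε) ^ (1 - β)) 0 :=
        ContinuousAt.rpow_const (by fun_prop) (Or.inr (by linarith))
      fun_prop
    exact this
  have e4 := t4.eventually_lt_const (u := η / 4) (by
    rw [mul_zero, Real.zero_rpow (by linarith)]; simp; positivity)
  have e5 : ∀ᶠ ε : ℝ in nhds 0, ε < κ / 2 := eventually_lt_nhds (by positivity)
  have e6 : ∀ᶠ ε : ℝ in nhds 0, ε < 1 / 2 := eventually_lt_nhds (by positivity)
  have e7 := ((e4.and e5).and e6).filter_mono (nhdsWithin_le_nhds (s := Ioi 0))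
  obtain ⟨ε, ⟨⟨h5, h6⟩, h7⟩, h8⟩ := (e7.and self_mem_nhdsWithin).exists
  refine ⟨H, θ, R', κ, ε, hH, hθ0, hθ1, h4, hκ0, h8, h7.le, h1.le, hθ2, ?_, ?_, ?_, h6, h5.le⟩
  · rw [hκ]; apply le_of_eq; field_simp; rw [hA]
  · refine le_trans (le_of_eq ?_) h2.le
    rw [hκ, Real.rpow_neg hR0.le]
    simp only [Real.rpow_ofNat]
    field_simp
  · have e : 6 * n * κ * R' / θ = (6 * n * A / θ) * R'⁻¹ := by rw [hκ]; field_simp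
    rw [e, Real.mul_rpow (by positivity) (by positivity), Real.inv_rpow hR0.le]
    have e' : R' ^ (-(p - 2)) = (R' ^ p)⁻¹ * R' ^ 2 := by
      rw [neg_sub, Real.rpow_sub hR0]; simp [div_eq_mul_inv, mul_comm]
    rw [e'] at h3
    rw [hκ, div_div, le_div_iff₀ (by positivity)]
    calc θ * ((6 * n * A / θ) ^ p * (R' ^ p)⁻¹) * (R' ^ 2 * 2) =
        2 * (θ * (6 * n * A / θ) ^ p * ((R' ^ p)⁻¹ * R' ^ 2)) := by ring
      _ ≤ A := by linarith

set_option maxHeartbeats 1000000 in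
theorem tan_est (hn : 1 ≤ n) (hν : ‖ν‖ = 1) {p β : ℝ} (hp : 2 < p)
    (hβ : 0 < β) (hβ1 : β < 1) {C K η : ℝ} (hC : 1 ≤ C) (hη : 0 < η) (hK : 0 ≤ K) :
    ∃ R > 0, ∃ ε > 0, ∀ D Dc w g, Near ν p β C R ε D Dc w g → ∀ x0 h : EuclideanSpace ℝ (Fin n),
      ⟪ν, x0⟫ = 1 → ⟪ν, h⟫ = 0 → ‖x0‖ ≤ K → ‖h‖ ≤ K → w (x0 + h) ≤ w x0 + η := by
  obtain ⟨H, θ, R', κ, ε, hH, hθ, hθ1, hHR, hκ, hε, hε1, c1, c2, c3, c4, c5, c6, c7⟩ :=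
    tan_params hn hp hβ hβ1 hC hη hK
  have hn0 : (1:ℝ) ≤ n := by exact_mod_cast hn
  have hνν : ⟪ν, ν⟫ = 1 := by rw [real_inner_self_eq_norm_sq, hν]; norm_num
  refine ⟨R' + 2 * K, by linarith, ε, hε, ?_⟩
  intro D Dc w g hN x0 h hx0 hh hx0K hhK
  -- the point set
  let Ks : Set (EuclideanSpace ℝ (Fin n)) :=
    {x | x ∈ Dc ∧ x + h ∈ Dc ∧ ‖x - x0‖ ≤ R' ∧ ⟪ν, x - 0⟫ ≤ H}
  have hKc : IsCompact Ks := by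
    have hcl : IsClosed Ks := by
      refine hN.cl.inter ((hN.cl.preimage (by fun_prop : Continuous fun x => x + h)).inter
        (IsClosed.inter (isClosed_le (f := fun x => ‖x - x0‖) (by fun_prop) continuous_const)
          (isClosed_le (f := fun x => ⟪ν, x - 0⟫) (by fun_prop) continuous_const)))
    refine (isCompact_closedBall x0 R').of_isClosed_subset hcl ?_
    intro x hx
    rw [mem_closedBall, dist_eq_norm]; exact hx.2.2.1
  have hin : ∀ z, ‖z‖ ≤ R' + 2 * K → ε < ⟪ν, z⟫ → z ∈ D := by
    intro z h1 h2
    by_contra h3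
    linarith [hN.out z h3 h1]
  have hnx : ∀ x ∈ Ks, ‖x‖ ≤ R' + 2 * K ∧ ‖x + h‖ ≤ R' + 2 * K := by
    intro x hx
    have h1 : ‖x‖ ≤ R' + K := by
      calc ‖x‖ = ‖(x - x0) + x0‖ := by simp
        _ ≤ _ := (norm_add_le _ _).trans (add_le_add hx.2.2.1 hx0K)
    exact ⟨by linarith, (norm_add_le _ _).trans (by linarith)⟩
  have hbd : ∀ z ∈ Dc, ‖z‖ ≤ R' + 2 * K → ∀ m, ⟪ν, z⟫ ≤ m → ε ≤ m → |w z| ≤ C * (m + ε) ^ (1 - β) := by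
    intro z hz hzn m h1 h2
    refine (hN.bd z hz hzn).trans ?_
    have : |⟪ν, z⟫| ≤ m := abs_le.2 ⟨by linarith [hN.low z hz hzn], h1⟩
    gcongr
  have hbdH : ∀ z ∈ Dc, ‖z‖ ≤ R' + 2 * K → ⟪ν, z⟫ ≤ H → |w z| ≤ C * (H + 1) := by
    intro z hz hzn h1
    refine (hbd z hz hzn H h1 (by linarith)).trans ?_
    have : (H + ε) ^ (1 - β) ≤ H + 1 := by
      calc (H + ε) ^ (1 - β) ≤ (H + 1) ^ (1 - β) := by gcongr; linarith
        _ ≤ (H + 1) ^ (1:ℝ) := Real.rpow_le_rpow_of_exponent_le (by linarith) (by linarith)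
        _ = H + 1 := by simp
    gcongr
  set m0 := η / 4 + θ * (C * (H + 1)) + η / 4 with hm0
  have hm00 : 0 ≤ m0 := by positivity
  have key : ∀ x ∈ Ks, w (x + h) - (1 - θ) * w x -
      (κ * (‖x - x0‖ ^ 2 + ((2 * n * H ^ 2) - 2 * n * ⟪ν, x - 0⟫ ^ 2))) ≤ m0 := by
    apply max_principle_soft hKc
    · have k1 : ContinuousOn (fun x => w (x + h)) Ks :=
        hN.cont.comp (by fun_prop) (fun x hx => hx.2.1)
      have k2 : ContinuousOn w Ks := hN.cont.mono (fun x hx => hx.1)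
      exact (k1.sub (continuousOn_const.mul k2)).sub (by fun_prop)
    · intro x hx hmax
      obtain ⟨hx1, hx2, hx3, hx4⟩ := id hx
      obtain ⟨hn1, hn2⟩ := hnx x hx
      rw [sub_zero] at hx4 ⊢
      have hlow := hN.low x hx1 hn1
      have hxh : ⟪ν, x + h⟫ = ⟪ν, x⟫ := by rw [inner_add_right, hh, add_zero]
      have hsq : ⟪ν, x⟫ ^ 2 ≤ H ^ 2 := by nlinarith
      have hΨ : 0 ≤ 2 * n * H ^ 2 - 2 * n * ⟪ν, x⟫ ^ 2 := by nlinarith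
      have hΨ2 : κ * ‖x - x0‖ ^ 2 ≤ κ * (‖x - x0‖ ^ 2 + ((2 * n * H ^ 2) - 2 * n * ⟪ν, x⟫ ^ 2)) := by
        gcongr; linarith
      have hΨ0 : 0 ≤ κ * ‖x - x0‖ ^ 2 := by positivity
      have hw1 := abs_le.1 (hbdH x hx1 hn1 hx4)
      have hw2 := abs_le.1 (hbdH (x + h) hx2 hn2 (by rw [hxh]; exact hx4))
      have hq : (2 * ε) ^ (1 - β) = (ε + ε) ^ (1 - β) := by ring_nf
      have hsmall : ⟪ν, x⟫ ≤ ε → w (x + h) - (1 - θ) * w x ≤ η / 4 := by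
        intro h1
        have a1 := abs_le.1 (hbd x hx1 hn1 ε h1 le_rfl)
        have a2 := abs_le.1 (hbd (x + h) hx2 hn2 ε (by rw [hxh]; exact h1) le_rfl)
        rw [hq] at c7
        have a3 : -((1 - θ) * w x) ≤ C * (ε + ε) ^ (1 - β) := by
          exact neg_one_sub_mul_le hθ.le hθ1 a1.1 (by positivity)
        linarith
      have hθC : 0 ≤ θ * (C * (H + 1)) := by positivity
      by_cases hxD : x ∈ D
      swap
      · have := hsmall (hN.out x hxD hn1); linarith
      by_cases hxhD : x + h ∈ D
      swap
      · have := hsmall (by rw [← hxh]; exact hN.out _ hxhD hn2); linarith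
      rcases hx3.eq_or_lt with h3 | h3
      · rw [h3] at hΨ2 ⊢
        have : -((1 - θ) * w x) ≤ C * (H + 1) := by
          exact neg_one_sub_mul_le hθ.le hθ1 hw1.1 (by positivity)
        linarith
      rcases hx4.eq_or_lt with h4 | h4
      · have := near_seg hN hε (H := H) (c := 0) (by linarith) (by linarith) hn1 hn2 h4 (by rw [hxh]; exact h4)
        rw [add_sub_cancel_left] at this
        have h5 : C * H ^ (-β) * ‖h‖ ≤ η / 4 := by
          refine le_trans ?_ c1
          gcongr
        have h6 := (abs_le.1 (this.trans h5)).2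
        have h7 : θ * w x ≤ θ * (C * (H + 1)) := by gcongr; exact hw1.2
        linarith
      exfalso
      have hnb : Ks ∈ nhds x := by
        have o1 : ∀ᶠ z in nhds x, z ∈ D := hN.op.mem_nhds hxD
        have o2 : ∀ᶠ z in nhds x, z + h ∈ D :=
          (hN.op.preimage (by fun_prop : Continuous fun x => x + h)).mem_nhds hxhD
        have o3 : ∀ᶠ z in nhds x, ‖z - x0‖ < R' :=
          (isOpen_lt (by fun_prop) continuous_const).mem_nhds h3
        have o4 : ∀ᶠ z in nhds x, ⟪ν, z - 0⟫ < H :=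
          (isOpen_lt (by fun_prop) continuous_const).mem_nhds (by simpa using h4)
        filter_upwards [o1, o2, o3, o4] with z z1 z2 z3 z4
        exact ⟨hN.sub z1, hN.sub z2, z3.le, z4.le⟩
      have hloc := hmax.isLocalMax hnb
      obtain ⟨L, hJ, hL⟩ := hN.jet x hxD
      obtain ⟨L', hJ', hL'⟩ := hN.jet (x + h) hxhD
      have Jl := (Jet.lin (x := x) ν 0).comp (U := fun τ => 2 * n * H ^ 2 - 2 * n * τ ^ 2)
        (U' := fun τ => - (2 * n * (2 * τ))) (U2 := - (2 * n * 2))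
        (Eventually.of_forall fun τ => by
          have := (((hasDerivAt_id τ).pow 2).const_mul (2 * (n:ℝ))).const_sub (2 * n * H ^ 2)
          refine this.congr_deriv ?_
          simp)
        (by
          have := (((hasDerivAt_id ⟪ν, x - 0⟫).const_mul 2).const_mul (2 * (n:ℝ))).neg
          refine this.congr_deriv ?_
          simp)
      have JJ := ((hJ'.translate h).sub (hJ.const_mul (1 - θ))).sub
        (((Jet.normSq (x := x) x0).add Jl).const_mul κ)
      obtain ⟨g1, g2⟩ := JJ.isLocalMax hloc
      rw [sub_zero] at g1
      rw [hν] at g2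
      set z := κ • ((2:ℝ) • (x - x0) + -(2 * n * (2 * ⟪ν, x⟫)) • ν) with hz
      have g3 : g (x + h) = (1 - θ) • g x + z := by
        have := sub_eq_zero.1 g1
        rw [← this]; abel
      have hzn : ‖z‖ ≤ 6 * n * κ * R' := by
        rw [hz, norm_smul, Real.norm_of_nonneg hκ.le]
        have b1 : ‖(2:ℝ) • (x - x0) + -(2 * n * (2 * ⟪ν, x⟫)) • ν‖ ≤ 2 * R' + 4 * n * R' := by
          refine (norm_add_le _ _).trans (add_le_add ?_ ?_)
          · rw [norm_smul]; norm_num; linarith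
          · rw [norm_smul, hν, mul_one, norm_neg, Real.norm_eq_abs, abs_mul, abs_mul, abs_mul]
            have : |⟪ν, x⟫| ≤ R' := abs_le.2 ⟨by linarith, by linarith⟩
            have b0 : 4 * (n:ℝ) * |⟪ν, x⟫| ≤ 4 * n * R' := mul_le_mul_of_nonneg_left this (by positivity)
            simp
            linarith
        calc _ ≤ κ * (2 * R' + 4 * n * R') := by gcongr
          _ ≤ 6 * n * κ * R' := by
            have : 0 ≤ (n - 1) * (κ * R') := mul_nonneg (by linarith) (mul_nonneg hκ.le (by linarith))
            linarith
      have hj := norm_jensen (by linarith : 1 ≤ p) hθ hθ1 (g x) z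
      have hzp : θ * (‖z‖ / θ) ^ p ≤ κ / 2 := by
        refine le_trans ?_ c5
        gcongr
      rw [← g3] at hj
      have b2 := abs_le.1 hL
      have b3 := abs_le.1 hL'
      have b4 : (1 - θ) * L ≤ (1 - θ) * (ε - ‖g x‖ ^ p) :=
        mul_le_mul_of_nonneg_left (by linarith) (by linarith)
      have b5 : κ ≤ κ * n := le_mul_of_one_le_right hκ.le hn0
      have b6 : θ * ε ≥ 0 := by positivity
      linarith
  have hx0D : x0 ∈ D := hin x0 (by linarith) (by linarith)
  have hxhn : ‖x0 + h‖ ≤ R' + 2 * K := (norm_add_le _ _).trans (by linarith)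
  have hx0hD : x0 + h ∈ D := hin _ hxhn (by rw [inner_add_right, hx0, hh]; linarith)
  have := key x0 ⟨hN.sub hx0D, hN.sub hx0hD, by simp; linarith, by simpa [hx0] using hH⟩
  rw [sub_self, sub_zero, hx0] at this
  have f1 := abs_le.1 (hbd x0 (hN.sub hx0D) (by linarith) 1 hx0.le (by linarith))
  have f2 : (1 + ε) ^ (1 - β) ≤ 2 := by
    calc (1 + ε) ^ (1 - β) ≤ (2:ℝ) ^ (1 - β) := by gcongr; linarith
      _ ≤ 2 ^ (1:ℝ) := Real.rpow_le_rpow_of_exponent_le (by linarith) (by linarith)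
      _ = 2 := by simp
  have f3 : - (θ * w x0) ≤ θ * (C * 2) := by
    have : - w x0 ≤ C * 2 := by
      have : C * (1 + ε) ^ (1 - β) ≤ C * 2 := by gcongr
      linarith
    nlinarith
  have f4 : κ * (2 * n * H ^ 2 - 2 * n * 1 ^ 2) ≤ η / 4 := by
    have : 0 ≤ κ * (2 * n) := by positivity
    nlinarith
  norm_num at this
  norm_num at f4
  rw [hm0] at this
  linarith

end Tangential

section Upper

theorem dp_pow {p β : ℝ} (hβ : 0 < β) (hβp : β * (p - 1) = 1) : (β ^ β) ^ p = β ^ β * β := by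
  rw [← Real.rpow_mul hβ.le, show β * p = β + 1 by linarith, Real.rpow_add hβ, Real.rpow_one]

theorem profile {p β μ e k τ : ℝ} (hβ : 0 < β) (hβ1 : β < 1) (hβp : β * (p - 1) = 1) (hμ : 0 < μ)
    (h : 0 < τ + e) :
    HasDerivAt (fun τ => μ * (β ^ β / (1 - β)) * (τ + e) ^ (1 - β) + k) (μ * β ^ β * (τ + e) ^ (-β)) τ ∧
    HasDerivAt (fun τ => μ * β ^ β * (τ + e) ^ (-β))
      (-(μ ^ (1 - p) * (μ * β ^ β * (τ + e) ^ (-β)) ^ p)) τ := by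
  have hl : HasDerivAt (fun τ => τ + e) 1 τ := (hasDerivAt_id τ).add_const e
  constructor
  · have := ((hl.rpow_const (p := 1 - β) (Or.inl h.ne')).const_mul (μ * (β ^ β / (1 - β)))).add_const k
    refine this.congr_deriv ?_
    rw [show 1 - β - 1 = -β by ring]
    have : (1 - β) ≠ 0 := by linarith
    field_simp
  · have := (hl.rpow_const (p := -β) (Or.inl h.ne')).const_mul (μ * β ^ β)
    refine this.congr_deriv ?_
    have hb : 0 < β ^ β := by positivity
    have e1 : (μ * β ^ β * (τ + e) ^ (-β)) ^ p = μ ^ p * (β ^ β * β) * (τ + e) ^ (-β - 1) := by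
      rw [Real.mul_rpow (by positivity) (by positivity), Real.mul_rpow hμ.le hb.le, dp_pow hβ hβp,
        ← Real.rpow_mul h.le, show -β * p = -β - 1 by linarith]
    have e2 : μ ^ (1 - p) * μ ^ p = μ := by rw [← Real.rpow_add hμ]; simp
    rw [e1]
    calc _ = - (μ * (β ^ β * β) * (τ + e) ^ (-β - 1)) := by ring
      _ = - ((μ ^ (1 - p) * μ ^ p) * (β ^ β * β) * (τ + e) ^ (-β - 1)) := by rw [e2]
      _ = _ := by ring

theorem tendsto_rpow_zero {q : ℝ} (hq : 0 < q) (b : ℝ) :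
    Tendsto (fun c : ℝ => (b * c) ^ q) (nhdsWithin 0 (Ioi 0)) (nhds 0) := by
  have : ContinuousAt (fun c : ℝ => (b * c) ^ q) 0 :=
    ContinuousAt.rpow_const (by fun_prop) (Or.inr hq.le)
  have h := this.tendsto
  rw [mul_zero, Real.zero_rpow hq.ne'] at h
  exact h.mono_left nhdsWithin_le_nhds

theorem up_params (n : ℕ) {p β cp dp : ℝ} (hp : 2 < p) (hβ : 0 < β) (hβ1 : β < 1)
    (hcp : 0 < cp) (hdp : 0 < dp) {C η : ℝ} (hC : 1 ≤ C) (hη : 0 < η) :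
    ∃ μ c e K κ ε, 1 < μ ∧ (μ - 1) * cp ≤ η / 8 ∧ 0 < e ∧ e < c ∧ c < 1 ∧
      C * (2 * c) ^ (1 - β) + c ^ 2 < η / 4 ∧ 2 + C * c ^ (-β) < dp * e ^ (-β) ∧ 1 ≤ K ∧ 0 < κ ∧ κ ≤ 1 ∧
      μ * cp + η / 4 + 2 * C ≤ κ * K ^ 2 ∧ 2 * κ * K / dp < 1 ∧
      1 - (1 - μ ^ (1 - p)) / 2 ≤ (1 - 2 * κ * K / dp) ^ p ∧
      2 * n * κ + ε < (1 - μ ^ (1 - p)) / 2 * dp ^ p ∧ 0 < ε ∧ 2 * ε ≤ c := by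
  set μ := 1 + η / 8 / cp with hμ
  have hμ1 : 1 < μ := by have : 0 < η / 8 / cp := by positivity
                         linarith
  have hμ2 : (μ - 1) * cp ≤ η / 8 := by rw [hμ]; apply le_of_eq; field_simp; ring
  have hm : μ ^ (1 - p) < 1 := Real.rpow_lt_one_of_one_lt_of_neg hμ1 (by linarith)
  have hpos : 0 < (1 - μ ^ (1 - p)) / 2 := by linarith
  have t1 : Tendsto (fun c : ℝ => C * (2 * c) ^ (1 - β) + c ^ 2) (nhdsWithin 0 (Ioi 0))
      (nhds (C * 0 + 0 ^ 2)) :=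
    ((tendsto_rpow_zero (by linarith) 2).const_mul C).add
      (((continuous_pow 2).tendsto (0:ℝ)).mono_left nhdsWithin_le_nhds)
  have e1 := t1.eventually_lt_const (u := η / 4) (by simp; positivity)
  obtain ⟨c, hc1, hc⟩ := (e1.and (Ioo_mem_nhdsGT (zero_lt_one' ℝ))).exists
  have t2 : Tendsto (fun e : ℝ => dp * e ^ (-β)) (nhdsWithin 0 (Ioi 0)) atTop :=
    (tendsto_rpow_neg_nhdsGT_zero (by linarith)).const_mul_atTop hdp
  obtain ⟨e, he1, he⟩ := ((t2.eventually_gt_atTop (2 + C * c ^ (-β))).and (Ioo_mem_nhdsGT hc.1)).exists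
  set A := μ * cp + η / 4 + 2 * C with hA
  have hA0 : 0 < A := by positivity
  have hinv : Tendsto (fun K : ℝ => K⁻¹) atTop (nhds 0) := tendsto_inv_atTop_zero
  have t3 : Tendsto (fun K : ℝ => A * (K⁻¹) ^ 2) atTop (nhds (A * 0 ^ 2)) := (hinv.pow 2).const_mul A
  have t4 : Tendsto (fun K : ℝ => 2 * A * K⁻¹ / dp) atTop (nhds (2 * A * 0 / dp)) :=
    (hinv.const_mul (2 * A)).div_const dp
  have t5 : Tendsto (fun K : ℝ => (1 - 2 * A * K⁻¹ / dp) ^ p) atTop (nhds ((1 - 2 * A * 0 / dp) ^ p)) :=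
    (t4.const_sub 1).rpow_const (Or.inr (by linarith))
  have t6 : Tendsto (fun K : ℝ => 2 * n * (A * (K⁻¹) ^ 2)) atTop (nhds (2 * n * (A * 0 ^ 2))) :=
    t3.const_mul _
  have hB : 0 < (1 - μ ^ (1 - p)) / 2 * dp ^ p := by positivity
  have e3 := t3.eventually_lt_const (u := 1) (by simp)
  have e4 := t4.eventually_lt_const (u := 1) (by simp)
  have e5 := t5.eventually_const_lt (u := 1 - (1 - μ ^ (1 - p)) / 2) (by simp; linarith)
  have e6 := t6.eventually_lt_const (u := (1 - μ ^ (1 - p)) / 2 * dp ^ p / 2) (by simpa using hB)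
  obtain ⟨K, ⟨⟨⟨h3, h4⟩, h5⟩, h6⟩, hK⟩ := ((((e3.and e4).and e5).and e6).and (eventually_ge_atTop 1)).exists
  have hK0 : 0 < K := by linarith
  have hk : 2 * (A * (K⁻¹) ^ 2) * K / dp = 2 * A * K⁻¹ / dp := by field_simp
  refine ⟨μ, c, e, K, A * (K⁻¹) ^ 2, min ((1 - μ ^ (1 - p)) / 2 * dp ^ p / 4) (c / 2), hμ1, hμ2, he.1, he.2,
    hc.2, hc1, he1, hK, by positivity, h3.le, ?_, by rw [hk]; exact h4, by rw [hk]; exact h5.le, ?_, ?_, ?_⟩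
  · apply le_of_eq; rw [← hA]; field_simp
  · have := min_le_left ((1 - μ ^ (1 - p)) / 2 * dp ^ p / 4) (c / 2)
    linarith
  · have := hc.1
    positivity
  · have := min_le_right ((1 - μ ^ (1 - p)) / 2 * dp ^ p / 4) (c / 2)
    linarith

variable {n : ℕ} {ν : EuclideanSpace ℝ (Fin n)}

/-- first order condition at a maximum over a set containing a segment in direction `e` -/
theorem inner_le_of_max_ray {φ : EuclideanSpace ℝ (Fin n) → ℝ} {x v e : EuclideanSpace ℝ (Fin n)} {L : ℝ}
    (hJ : Jet φ x v L) {S : Set (EuclideanSpace ℝ (Fin n))} (hmax : IsMaxOn φ S x)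
    (hS : ∀ᶠ τ in nhdsWithin (0:ℝ) (Ioi 0), x + τ • e ∈ S) : ⟪v, e⟫ ≤ 0 := by
  have hl : HasDerivAt (fun τ : ℝ => x + τ • e) e 0 := by
    simpa using ((hasDerivAt_id (0:ℝ)).smul_const e).const_add x
  have hd := gradAt_line (γ := fun τ : ℝ => x + τ • e) (τ := 0) (v := v) (by simpa using hJ.hasGradientAt) hl
  refine le_of_tendsto hd.tendsto_slope_zero_right ?_
  filter_upwards [hS, self_mem_nhdsWithin] with τ h1 h2
  have h3 : φ (x + τ • e) ≤ φ x := hmax h1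
  have h2' : 0 < τ := h2
  simp only [zero_add, zero_smul, add_zero, smul_eq_mul]
  exact mul_nonpos_of_nonneg_of_nonpos (inv_nonneg.2 h2'.le) (by linarith)

set_option maxHeartbeats 1000000 in
theorem up_est (hn : 1 ≤ n) (hν : ‖ν‖ = 1) {p β : ℝ} (hp : 2 < p)
    (hβ : 0 < β) (hβ1 : β < 1) (hβp : β * (p - 1) = 1) {C η : ℝ} (hC : 1 ≤ C) (hη : 0 < η) :
    ∃ R > 0, ∃ ε > 0, ∀ D Dc w g, Near ν p β C R ε D Dc w g →
      w ν ≤ β ^ β / (1 - β) + η := by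
  have h1β : 0 < 1 - β := by linarith
  set dp := β ^ β with hdp
  have hdp0 : 0 < dp := by positivity
  set cp := dp / (1 - β) with hcp
  have hcp0 : 0 < cp := by positivity
  obtain ⟨μ, c, e, K, κ, ε1, hμ, c1, he, hec, hc1, c2, c3, hK, hκ, hκ1, c4, c5, c6, c7, hε1, c8⟩ :=
    up_params n hp hβ hβ1 hcp0 hdp0 hC hη
  obtain ⟨R1, hR1, ε2, hε2, htan⟩ := tan_est hn hν hp hβ hβ1 hC (show 0 < η / 4 by linarith)
    (show 0 ≤ K + 1 by linarith)
  have hνν : ⟪ν, ν⟫ = 1 := by rw [real_inner_self_eq_norm_sq, hν]; norm_num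
  refine ⟨max R1 K, by positivity, min ε1 ε2, by positivity, ?_⟩
  intro D Dc w g hN0
  have hN2 := hN0.mono (by linarith) hβ1 (by positivity) (le_max_left _ _) (min_le_right ε1 ε2)
  have hN := hN0.mono (by linarith) hβ1 (by positivity) (le_max_right _ _) (min_le_left ε1 ε2)
  by_contra hcon
  push Not at hcon
  have htop : ∀ x, ⟪ν, x⟫ = 1 → ‖x‖ ≤ K → cp + 3 * η / 4 ≤ w x := by
    intro x hx hxK
    have := htan D Dc w g hN2 x (ν - x) hx (by rw [inner_sub_right, hνν, hx]; ring) (by linarith)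
      ((norm_sub_le _ _).trans (by rw [hν]; linarith))
    rw [add_sub_cancel] at this
    linarith
  have hin : ∀ z, ‖z‖ ≤ K → c ≤ ⟪ν, z⟫ → z ∈ D := by
    intro z h1 h2
    by_contra h3
    linarith [hN.out z h3 h1]
  let Ks : Set (EuclideanSpace ℝ (Fin n)) := {x | c ≤ ⟪ν, x⟫ ∧ ⟪ν, x⟫ ≤ 1 ∧ ‖x‖ ≤ K}
  have hKc : IsCompact Ks := by
    have hcl : IsClosed Ks := by
      refine (isClosed_le continuous_const (g := fun x => ⟪ν, x⟫) (by fun_prop)).inter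
        (IsClosed.inter (isClosed_le (f := fun x => ⟪ν, x⟫) (by fun_prop) continuous_const)
          (isClosed_le (f := fun x => ‖x‖) (by fun_prop) continuous_const))
    refine (isCompact_closedBall 0 K).of_isClosed_subset hcl ?_
    intro x hx
    rw [mem_closedBall, dist_zero_right]; exact hx.2.2
  have hKD : ∀ x ∈ Ks, x ∈ D := fun x hx => hin x hx.2.2 hx.1
  have hpr : ∀ y, 0 < y + (e - c) → _ := fun y hy =>
    profile (p := p) (k := η / 4) (τ := y) (e := e - c) hβ hβ1 hβp (by linarith : 0 < μ) hy
  have key : ∀ x ∈ Ks, ((μ * (β ^ β / (1 - β)) * (⟪ν, x - 0⟫ + (e - c)) ^ (1 - β) + η / 4) - κ * ‖x - 0‖ ^ 2)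
      - w x ≤ 0 := by
    apply max_principle_soft hKc
    · have k2 : ContinuousOn w Ks := hN.cont.mono (fun x hx => hN.sub (hKD x hx))
      have k1 : Continuous (fun x => (⟪ν, x - 0⟫ + (e - c)) ^ (1 - β)) :=
        Continuous.rpow_const (by fun_prop) (fun x => Or.inr h1β.le)
      fun_prop
    · intro x hx hmax
      obtain ⟨hx1, hx2, hx3⟩ := id hx
      have hxD := hKD x hx
      simp only [sub_zero]
      set τ := ⟪ν, x⟫ + (e - c) with hτ
      have hτ0 : e ≤ τ := by linarith
      have hτ1 : τ ≤ 1 := by linarith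
      have hτ00 : 0 < τ := by linarith
      have hτq : τ ^ (1 - β) ≤ 1 := Real.rpow_le_one hτ00.le hτ1 h1β.le
      have hμcp : 0 ≤ μ * cp := by positivity
      have hW : μ * (β ^ β / (1 - β)) * τ ^ (1 - β) ≤ μ * cp := mul_le_of_le_one_right hμcp hτq
      have hκn : 0 ≤ κ * ‖x‖ ^ 2 := by positivity
      rcases hx3.eq_or_lt with h3 | h3
      · rw [h3]
        have a1 := abs_le.1 (hN.bd x (hN.sub hxD) hx3)
        have a2 : (|⟪ν, x⟫| + ε1) ^ (1 - β) ≤ 2 := by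
          have : |⟪ν, x⟫| ≤ 1 := abs_le.2 ⟨by linarith, hx2⟩
          calc (|⟪ν, x⟫| + ε1) ^ (1 - β) ≤ (2:ℝ) ^ (1 - β) := by gcongr; linarith
            _ ≤ 2 ^ (1:ℝ) := Real.rpow_le_rpow_of_exponent_le (by linarith) (by linarith)
            _ = 2 := by simp
        have a3 : C * (|⟪ν, x⟫| + ε1) ^ (1 - β) ≤ C * 2 := by gcongr
        linarith
      rcases hx2.eq_or_lt with h2 | h2
      · have := htop x h2 hx3
        linarith
      exfalso
      obtain ⟨L, hJ, hL⟩ := hN.jet x hxD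
      have hτ' : 0 < ⟪ν, x - 0⟫ + (e - c) := by rw [sub_zero]; exact hτ00
      have Jl := (Jet.lin (x := x) ν 0).comp
        (by
          have : ∀ᶠ y in nhds ⟪ν, x - 0⟫, 0 < y + (e - c) :=
            (isOpen_lt continuous_const (by fun_prop)).mem_nhds hτ'
          filter_upwards [this] with y hy
          exact (hpr y hy).1) (hpr _ hτ').2
      have JJ := (Jl.sub ((Jet.normSq (x := x) 0).const_mul κ)).sub hJ
      rw [sub_zero, hν, ← hτ] at JJ
      set Y := μ * β ^ β * τ ^ (-β) with hY
      have hYdp : dp ≤ Y := by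
        have : 1 ≤ τ ^ (-β) := Real.one_le_rpow_of_pos_of_le_one_of_nonpos hτ00 hτ1 (by linarith)
        have h5 : dp ≤ μ * dp := le_mul_of_one_le_left hdp0.le hμ.le
        exact h5.trans (le_mul_of_one_le_right (by positivity) this)
      rcases hx1.eq_or_lt with h1 | h1
      · have hray := inner_le_of_max_ray (e := ν) JJ hmax (by
          have o1 : ∀ᶠ s in nhds (0:ℝ), ‖x + s • ν‖ < K :=
            (isOpen_lt (by fun_prop) continuous_const).mem_nhds (by simpa using h3)
          have o2 : ∀ᶠ s in nhds (0:ℝ), ⟪ν, x + s • ν⟫ < 1 :=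
            (isOpen_lt (by fun_prop) continuous_const).mem_nhds (by simpa using h2)
          filter_upwards [nhdsWithin_le_nhds o1, nhdsWithin_le_nhds o2, self_mem_nhdsWithin] with s s1 s2 s3
          refine ⟨?_, s2.le, s1.le⟩
          rw [inner_add_right, inner_smul_right, hνν, ← h1]
          have : 0 < s := s3
          linarith)
        have hg := hN.gr x hxD hx3 (by linarith) (by linarith)
        rw [← h1] at hg
        have hgi : ⟪g x, ν⟫ ≤ C * c ^ (-β) := by
          have := real_inner_le_norm (g x) ν
          rw [hν, mul_one] at this
          linarith
        have hτe : τ = e := by rw [hτ, ← h1]; ring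
        have hYe : dp * e ^ (-β) ≤ Y := by
          rw [hY, hτe]
          gcongr
          exact le_mul_of_one_le_left hdp0.le hμ.le
        simp only [inner_sub_left, inner_smul_left, hνν] at hray
        rw [real_inner_comm, ← h1] at hray
        simp at hray
        have hκc : κ * (2 * c) ≤ 2 := by nlinarith
        linarith
      · have hnb : Ks ∈ nhds x := by
          have o1 : ∀ᶠ z in nhds x, c < ⟪ν, z⟫ :=
            (isOpen_lt continuous_const (by fun_prop)).mem_nhds h1
          have o2 : ∀ᶠ z in nhds x, ⟪ν, z⟫ < 1 :=
            (isOpen_lt (by fun_prop) continuous_const).mem_nhds h2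
          have o3 : ∀ᶠ z in nhds x, ‖z‖ < K :=
            (isOpen_lt (by fun_prop) continuous_const).mem_nhds h3
          filter_upwards [o1, o2, o3] with z z1 z2 z3
          exact ⟨z1.le, z2.le, z3.le⟩
        obtain ⟨g1, g2⟩ := JJ.isLocalMax (hmax.isLocalMax hnb)
        have g3 : g x = Y • ν - κ • (2:ℝ) • x := (sub_eq_zero.1 g1).symm
        have g4 : Y * (1 - 2 * κ * K / dp) ≤ ‖g x‖ := by
          have b1 : ‖Y • ν‖ ≤ ‖g x‖ + ‖κ • (2:ℝ) • x‖ := by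
            have : Y • ν = g x + κ • (2:ℝ) • x := by rw [g3]; abel
            rw [this]; exact norm_add_le _ _
          rw [norm_smul, norm_smul, norm_smul, hν, Real.norm_of_nonneg (by linarith), Real.norm_of_nonneg hκ.le,
            mul_one] at b1
          norm_num at b1
          have b2 : κ * (2 * ‖x‖) ≤ 2 * κ * K := by nlinarith
          have b3 : 2 * κ * K ≤ Y * (2 * κ * K / dp) := by
            calc 2 * κ * K = dp * (2 * κ * K / dp) := by field_simp
              _ ≤ _ := by gcongr
          linarith
        have hY0 : 0 < Y := by linarith
        have g5 : Y ^ p * (1 - (1 - μ ^ (1 - p)) / 2) ≤ ‖g x‖ ^ p := by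
          calc Y ^ p * (1 - (1 - μ ^ (1 - p)) / 2) ≤ Y ^ p * (1 - 2 * κ * K / dp) ^ p := by gcongr
            _ = (Y * (1 - 2 * κ * K / dp)) ^ p := by rw [Real.mul_rpow hY0.le (by linarith)]
            _ ≤ _ := Real.rpow_le_rpow (mul_nonneg hY0.le (by linarith)) g4 (by linarith)
        have g6 := (abs_le.1 hL).2
        have hm : μ ^ (1 - p) < 1 := Real.rpow_lt_one_of_one_lt_of_neg hμ (by linarith)
        have g7 : (1 - μ ^ (1 - p)) / 2 * dp ^ p ≤ (1 - μ ^ (1 - p)) / 2 * Y ^ p := by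
          apply mul_le_mul_of_nonneg_left _ (by linarith)
          exact Real.rpow_le_rpow hdp0.le hYdp (by linarith)
        linarith
  have hc0 : 0 < c := by linarith
  have hcK : c • ν ∈ Ks := by
    refine ⟨?_, ?_, ?_⟩
    · rw [inner_smul_right, hνν, mul_one]
    · rw [inner_smul_right, hνν, mul_one]; exact hc1.le
    · rw [norm_smul, hν, Real.norm_of_nonneg hc0.le]; linarith
  have f1 := key _ hcK
  have f2 := abs_le.1 (hN.bd _ (hN.sub (hKD _ hcK)) hcK.2.2)
  simp only [sub_zero, inner_smul_right, hνν, mul_one, norm_smul, hν] at f1 f2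
  rw [Real.norm_of_nonneg hc0.le, show c + (e - c) = e by ring] at f1
  rw [abs_of_pos hc0] at f2
  have f3 : C * (c + ε1) ^ (1 - β) ≤ C * (2 * c) ^ (1 - β) := by gcongr; linarith
  have f4 : κ * c ^ 2 ≤ c ^ 2 := mul_le_of_le_one_left (by positivity) hκ1
  have f5 : 0 ≤ μ * (β ^ β / (1 - β)) * e ^ (1 - β) := by positivity
  linarith

end Upper

section Lower

variable {n : ℕ} {ν : EuclideanSpace ℝ (Fin n)}

/-- A defining function of the rescaled domain. -/
structure Defn (ν : EuclideanSpace ℝ (Fin n)) (R ε : ℝ) (D Dc : Set (EuclideanSpace ℝ (Fin n)))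
    (r : EuclideanSpace ℝ (Fin n) → ℝ) : Prop where
  jet : ∀ x, ‖x‖ ≤ R → ∃ v L, Jet r x v L ∧ ‖v - ν‖ ≤ ε ∧ |L| ≤ ε
  pos : ∀ x ∈ D, ‖x‖ ≤ R → 0 < r x
  zero : ∀ x ∈ Dc, x ∉ D → ‖x‖ ≤ R → r x = 0
  near : ∀ x, ‖x‖ ≤ R → |r x - ⟪ν, x⟫| ≤ ε

theorem low_params (n : ℕ) {p β cp dp : ℝ} (hp : 2 < p) (hβ : 0 < β) (hβ1 : β < 1)
    (hcp : 0 < cp) (hdp : 0 < dp) {C η : ℝ} (hC : 1 ≤ C) (hη : 0 < η) (hη1 : η < cp) :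
    ∃ μ e d1 m K κ ε, 0 < μ ∧ μ < 1 ∧ 0 < e ∧ e < 1 ∧ cp - η / 2 ≤ μ * cp * (1 - e ^ (1 - β)) ∧
      d1 = μ * dp * 3 ^ (-β) ∧ m = μ ^ (1 - p) - 1 ∧ 0 < m ∧ 1 ≤ K ∧ 0 < κ ∧ 2 * C ≤ κ * K ^ 2 ∧
      (1 + ε + 2 * κ * K / d1) ^ p ≤ 1 + m / 4 ∧ 1 + m / 2 ≤ (1 + m) * (1 - ε) ^ 2 ∧
      ε * d1 + 2 * n * κ + ε < m / 4 * d1 ^ p ∧ cp * ε ≤ η / 2 ∧ 0 < ε ∧ ε ≤ 1 / 2 := by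
  have hq : 0 < 1 - β := by linarith
  have hx : 0 < η / (4 * cp) := by positivity
  have hx1 : η / (4 * cp) < 1 := by rw [div_lt_one (by positivity)]; linarith
  set μ := 1 - η / (4 * cp) with hμ
  have hμ0 : 0 < μ := by linarith
  have hμ1 : μ < 1 := by linarith
  have hμc : μ * cp = cp - η / 4 := by rw [hμ]; field_simp
  have t1 : Tendsto (fun e : ℝ => cp * (1 * e) ^ (1 - β)) (nhdsWithin 0 (Ioi 0)) (nhds (cp * 0)) :=
    (tendsto_rpow_zero hq 1).const_mul cp
  have e1 := t1.eventually_lt_const (u := η / 4) (by simp; positivity)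
  obtain ⟨e, he1, he⟩ := (e1.and (Ioo_mem_nhdsGT (zero_lt_one' ℝ))).exists
  rw [one_mul] at he1
  set d1 := μ * dp * 3 ^ (-β) with hd1
  have hd10 : 0 < d1 := by positivity
  set m := μ ^ (1 - p) - 1 with hm
  have hm0 : 0 < m := by
    have : 1 < μ ^ (1 - p) := Real.one_lt_rpow_of_pos_of_lt_one_of_neg hμ0 hμ1 (by linarith)
    linarith
  have hinv : Tendsto (fun K : ℝ => K⁻¹) atTop (nhds 0) := tendsto_inv_atTop_zero
  have t4 : Tendsto (fun K : ℝ => 1 + 4 * C * K⁻¹ / d1) atTop (nhds (1 + 4 * C * 0 / d1)) :=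
    ((hinv.const_mul (4 * C)).div_const d1).const_add 1
  have t5 : Tendsto (fun K : ℝ => (1 + 4 * C * K⁻¹ / d1) ^ p) atTop (nhds ((1 + 4 * C * 0 / d1) ^ p)) :=
    t4.rpow_const (Or.inr (by linarith))
  have t6 : Tendsto (fun K : ℝ => 2 * n * (2 * C * (K⁻¹) ^ 2)) atTop (nhds (2 * n * (2 * C * 0 ^ 2))) :=
    ((hinv.pow 2).const_mul _).const_mul _
  have e5 := t5.eventually_lt_const (u := 1 + m / 4) (by simp; positivity)
  have e6 := t6.eventually_lt_const (u := m / 4 * d1 ^ p) (by simp; positivity)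
  obtain ⟨K, ⟨h5, h6⟩, hK⟩ := ((e5.and e6).and (eventually_ge_atTop 1)).exists
  have hK0 : 0 < K := by linarith
  have hk : 2 * (2 * C * (K⁻¹) ^ 2) * K / d1 = 4 * C * K⁻¹ / d1 := by field_simp; norm_num
  set κ := 2 * C * (K⁻¹) ^ 2 with hκ
  have hl : nhdsWithin (0:ℝ) (Ioi 0) ≤ nhds 0 := nhdsWithin_le_nhds
  have s1 : Tendsto (fun ε : ℝ => (1 + ε + 2 * κ * K / d1) ^ p) (nhds 0) (nhds ((1 + 0 + 2 * κ * K / d1) ^ p)) :=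
    Tendsto.rpow_const (Continuous.tendsto (f := fun ε : ℝ => 1 + ε + 2 * κ * K / d1) (by fun_prop) 0)
      (Or.inr (by linarith))
  have s2 : Tendsto (fun ε : ℝ => (1 + m) * (1 - ε) ^ 2) (nhds 0) (nhds ((1 + m) * (1 - 0) ^ 2)) :=
    Continuous.tendsto (by fun_prop) 0
  have s3 : Tendsto (fun ε : ℝ => ε * d1 + 2 * n * κ + ε) (nhds 0) (nhds (0 * d1 + 2 * n * κ + 0)) :=
    Continuous.tendsto (by fun_prop) 0
  have s4 : Tendsto (fun ε : ℝ => cp * ε) (nhds 0) (nhds (cp * 0)) :=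
    Continuous.tendsto (by fun_prop) 0
  have q1 := s1.eventually_lt_const (u := 1 + m / 4) (by rw [hk, add_zero]; exact h5)
  have q2 := s2.eventually_const_lt (u := 1 + m / 2) (by norm_num; linarith)
  have q3 := s3.eventually_lt_const (u := m / 4 * d1 ^ p) (by simpa using h6)
  have q4 := s4.eventually_lt_const (u := η / 2) (by simp; positivity)
  have q5 : ∀ᶠ ε : ℝ in nhds 0, ε < 1 / 2 := eventually_lt_nhds (by positivity)
  obtain ⟨ε, ⟨⟨⟨⟨h1, h2⟩, h3⟩, h4⟩, h7⟩, h8⟩ :=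
    ((((((q1.and q2).and q3).and q4).and q5).filter_mono hl).and self_mem_nhdsWithin).exists
  refine ⟨μ, e, d1, m, K, κ, ε, hμ0, hμ1, he.1, he.2, ?_, rfl, rfl, hm0, hK, by positivity, ?_, h1.le, h2.le,
    h3, h4.le, h8, h7.le⟩
  · rw [mul_sub, mul_one, hμc]
    have : (cp - η / 4) * e ^ (1 - β) ≤ cp * e ^ (1 - β) := by
      have := he.1
      gcongr
      linarith
    linarith
  · rw [hκ]; apply le_of_eq; field_simp

theorem low_interior {p Y m K κ ε d1 Lr : ℝ} {v z : EuclideanSpace ℝ (Fin n)} (hp : 2 < p) (hν : ‖ν‖ = 1)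
    (hm : 0 < m) (hK : 1 ≤ K) (hκ : 0 < κ) (hε : 0 < ε) (hε1 : ε ≤ 1 / 2)
    (c1 : (1 + ε + 2 * κ * K / d1) ^ p ≤ 1 + m / 4) (c2 : 1 + m / 2 ≤ (1 + m) * (1 - ε) ^ 2)
    (c3 : ε * d1 + 2 * n * κ + ε < m / 4 * d1 ^ p) (hd1 : 0 < d1) (hY : d1 ≤ Y) (hv : ‖v - ν‖ ≤ ε)
    (hL : |Lr| ≤ ε) (hz : ‖z‖ ≤ K) :
    (-((1 + m) * Y ^ p) * ‖v‖ ^ 2 + Y * Lr + κ * (2 * n)) + ‖Y • v + κ • (2:ℝ) • z‖ ^ p < - ε := by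
  have hY0 : 0 < Y := by linarith
  have hp0 : 0 < p := by linarith
  have v1 : ‖v‖ ≤ 1 + ε := by
    calc ‖v‖ = ‖ν + (v - ν)‖ := by congr 1; abel
      _ ≤ _ := (norm_add_le _ _).trans (by rw [hν]; linarith)
  have v2 : 1 - ε ≤ ‖v‖ := by
    have : ‖ν‖ ≤ ‖v‖ + ‖v - ν‖ := by
      calc ‖ν‖ = ‖v - (v - ν)‖ := by congr 1; abel
        _ ≤ _ := norm_sub_le _ _
    linarith
  have v3 : 1 + m / 2 ≤ (1 + m) * ‖v‖ ^ 2 := by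
    refine c2.trans ?_
    have : (1 - ε) ^ 2 ≤ ‖v‖ ^ 2 := by
      apply pow_le_pow_left₀ (by linarith) v2
    gcongr
  have V1 : ‖Y • v + κ • (2:ℝ) • z‖ ≤ Y * (1 + ε + 2 * κ * K / d1) := by
    refine (norm_add_le _ _).trans ?_
    rw [norm_smul, norm_smul, norm_smul, Real.norm_of_nonneg hY0.le, Real.norm_of_nonneg hκ.le]
    norm_num
    have b1 : Y * ‖v‖ ≤ Y * (1 + ε) := by gcongr
    have b2 : κ * (2 * ‖z‖) ≤ κ * (2 * K) := by gcongr
    have b3 : 2 * κ * K ≤ Y * (2 * κ * K / d1) := by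
      calc 2 * κ * K = d1 * (2 * κ * K / d1) := by field_simp
        _ ≤ _ := by gcongr
    linarith
  have V2 : ‖Y • v + κ • (2:ℝ) • z‖ ^ p ≤ Y ^ p * (1 + m / 4) := by
    refine (Real.rpow_le_rpow (norm_nonneg _) V1 hp0.le).trans ?_
    have : 0 ≤ 1 + ε + 2 * κ * K / d1 := by positivity
    rw [Real.mul_rpow hY0.le this]
    gcongr
  have hYp : 0 < Y ^ p := by positivity
  have y1 : 1 ≤ Y / d1 := by rw [one_le_div hd1]; exact hY
  have y2 : Y / d1 ≤ (Y / d1) ^ p := by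
    calc Y / d1 = (Y / d1) ^ (1:ℝ) := by simp
      _ ≤ _ := Real.rpow_le_rpow_of_exponent_le y1 (by linarith)
  have y4 : (Y / d1) ^ p * d1 ^ p = Y ^ p := by
    rw [← Real.mul_rpow (by positivity) hd1.le]; congr 1; field_simp
  have y5 : Y = (Y / d1) * d1 := by field_simp
  set y := (Y / d1) ^ p with hy
  have y3 : 1 ≤ y := y1.trans y2
  have r1 : Y * Lr ≤ y * (ε * d1) := by
    calc Y * Lr ≤ Y * ε := by gcongr; exact (le_abs_self _).trans hL
      _ = (Y / d1) * (d1 * ε) := by field_simp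
      _ ≤ y * (d1 * ε) := by gcongr
      _ = _ := by ring
  have r2 : κ * (2 * n) + ε ≤ y * (κ * (2 * n) + ε) := le_mul_of_one_le_left (by positivity) y3
  have r3 : y * (ε * d1 + 2 * n * κ + ε) < m / 4 * Y ^ p := by
    calc y * (ε * d1 + 2 * n * κ + ε) < y * (m / 4 * d1 ^ p) := by gcongr
      _ = m / 4 * (y * d1 ^ p) := by ring
      _ = _ := by rw [y4]
  have r4 : Y ^ p * (1 + m / 2) ≤ Y ^ p * ((1 + m) * ‖v‖ ^ 2) := by gcongr
  linarith

theorem defn_lip {R ε : ℝ} {D Dc : Set (EuclideanSpace ℝ (Fin n))} {r : EuclideanSpace ℝ (Fin n) → ℝ}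
    (hr : Defn ν R ε D Dc r) (hν : ‖ν‖ = 1) (hε : ε ≤ 1) {x b : EuclideanSpace ℝ (Fin n)}
    (hx : ‖x‖ ≤ R) (hb : ‖b‖ ≤ R) : r x - r b ≤ 2 * ‖x - b‖ := by
  choose! v L hJ hv hL using hr.jet
  have := (convex_closedBall (0 : EuclideanSpace ℝ (Fin n)) R).norm_image_sub_le_of_norm_hasFDerivWithin_le
    (f := r) (f' := fun z => innerSL ℝ (v z)) (C := 2) (x := b) (y := x)
    (fun z hz => (gradAt_fd (hJ z (by simpa using hz)).hasGradientAt).hasFDerivWithinAt)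
    (fun z hz => by
      rw [innerSL_apply_norm]
      have hz' : ‖z‖ ≤ R := by simpa using hz
      calc ‖v z‖ = ‖ν + (v z - ν)‖ := by congr 1; abel
        _ ≤ _ := (norm_add_le _ _).trans (by rw [hν]; linarith [hv z hz'])) (by simpa using hb) (by simpa using hx)
  exact (le_abs_self _).trans this

theorem rpow_sub_le {q e τ : ℝ} (hq : 0 < q) (hq1 : q ≤ 1) (he : 0 < e) (hτ : 0 ≤ τ) :
    (τ + e) ^ q - e ^ q ≤ e ^ q / e * τ := by
  have e1 : τ + e = e * (1 + τ / e) := by field_simp; ring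
  have h0 : 0 ≤ τ / e := by positivity
  have h1 : (1 + τ / e) ^ q ≤ 1 + τ / e := by
    calc (1 + τ / e) ^ q ≤ (1 + τ / e) ^ (1:ℝ) := Real.rpow_le_rpow_of_exponent_le (by linarith) hq1
      _ = _ := by simp
  rw [e1, Real.mul_rpow he.le (by linarith)]
  calc e ^ q * (1 + τ / e) ^ q - e ^ q ≤ e ^ q * (1 + τ / e) - e ^ q := by gcongr
    _ = _ := by field_simp; ring

set_option maxHeartbeats 1000000 in
theorem low_est (hν : ‖ν‖ = 1) {p β : ℝ} (hp : 2 < p)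
    (hβ : 0 < β) (hβ1 : β < 1) (hβp : β * (p - 1) = 1) {C η : ℝ} (hC : 1 ≤ C) (hη : 0 < η)
    (hη1 : η < β ^ β / (1 - β)) :
    ∃ R > 0, ∃ ε > 0, ∃ A > 0, ∀ D Dc w g r, Near ν p β C R ε D Dc w g → Defn ν R ε D Dc r →
      (∀ x, ⟪ν, x⟫ = 1 → ‖x‖ ≤ R → w x ≤ β ^ β / (1 - β) - η) →
      ∀ b ∈ Dc, b ∉ D → ‖b‖ ≤ 1 → ∀ x ∈ Dc, ‖x - b‖ ≤ 1 / 4 → |w x| ≤ A * ‖x - b‖ := by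
  have h1β : 0 < 1 - β := by linarith
  set dp := β ^ β with hdp
  have hdp0 : 0 < dp := by positivity
  set cp := dp / (1 - β) with hcp
  have hcp0 : 0 < cp := by positivity
  obtain ⟨μ, e, d1, m, K, κ, ε, hμ, hμ1, he, he1, c1, hd1, hm, hm0, hK, hκ, c2, c3, c4, c5, c6, hε, hε1⟩ :=
    low_params n hp hβ hβ1 hcp0 hdp0 hC hη hη1
  have hd10 : 0 < d1 := by rw [hd1]; positivity
  set A0 := 1 + 2 * C / (cp - η) with hA0
  have hcη : 0 < cp - η := by linarith
  have hA1 : 1 ≤ A0 := by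
    have : 0 ≤ 2 * C / (cp - η) := by positivity
    linarith
  have hA2 : 2 * C ≤ A0 * (cp - η) := by
    rw [hA0, add_mul, div_mul_cancel₀ _ hcη.ne']; linarith
  refine ⟨K + 1, by linarith, ε, hε, A0 * (μ * cp * (e ^ (1 - β) / e) * 2 + κ), by positivity, ?_⟩
  intro D Dc w g r hN hr htop b hbc hbD hb1
  let Ks : Set (EuclideanSpace ℝ (Fin n)) := {x | x ∈ Dc ∧ ⟪ν, x⟫ ≤ 1 ∧ ‖x - b‖ ≤ K}
  have hKn : ∀ x ∈ Ks, ‖x‖ ≤ K + 1 := by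
    intro x hx
    calc ‖x‖ = ‖(x - b) + b‖ := by simp
      _ ≤ _ := (norm_add_le _ _).trans (add_le_add hx.2.2 hb1)
  have hKc : IsCompact Ks := by
    have hcl : IsClosed Ks := by
      refine hN.cl.inter (IsClosed.inter (isClosed_le (f := fun x => ⟪ν, x⟫) (by fun_prop) continuous_const)
          (isClosed_le (f := fun x => ‖x - b‖) (by fun_prop) continuous_const))
    refine (isCompact_closedBall b K).of_isClosed_subset hcl ?_
    intro x hx
    rw [mem_closedBall, dist_eq_norm]; exact hx.2.2
  set W : EuclideanSpace ℝ (Fin n) → ℝ :=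
    fun x => (μ * (β ^ β / (1 - β)) * (r x + e) ^ (1 - β) + -(μ * cp * e ^ (1 - β))) + κ * ‖x - b‖ ^ 2 with hW
  have hrc : ContinuousOn r Ks := by
    intro x hx
    obtain ⟨v, L, hJ, _⟩ := hr.jet x (hKn x hx)
    exact (gradAt_fd hJ.hasGradientAt).continuousAt.continuousWithinAt
  have hWc : ContinuousOn W Ks := by
    have k1 : ContinuousOn (fun x => (r x + e) ^ (1 - β)) Ks :=
      ContinuousOn.rpow_const (by fun_prop) (fun x hx => Or.inr h1β.le)
    fun_prop
  have hwc : ContinuousOn w Ks := hN.cont.mono (fun x hx => hx.1)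
  have hr0 : ∀ x ∈ Ks, 0 ≤ r x := by
    intro x hx
    by_cases h : x ∈ D
    · exact (hr.pos x h (hKn x hx)).le
    · exact (hr.zero x hx.1 h (hKn x hx)).ge
  have hW0 : ∀ x ∈ Ks, κ * ‖x - b‖ ^ 2 ≤ W x := by
    intro x hx
    have h1 : e ^ (1 - β) ≤ (r x + e) ^ (1 - β) := by
      apply Real.rpow_le_rpow he.le _ h1β.le
      linarith [hr0 x hx]
    have h2 : μ * cp * e ^ (1 - β) ≤ μ * cp * (r x + e) ^ (1 - β) := by gcongr
    simp only [hW]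
    linarith
  have hwb : ∀ x ∈ Ks, |w x| ≤ 2 * C := by
    intro x hx
    refine (hN.bd x hx.1 (hKn x hx)).trans ?_
    have h1 : |⟪ν, x⟫| ≤ 1 := abs_le.2 ⟨by linarith [hN.low x hx.1 (hKn x hx)], hx.2.1⟩
    have : (|⟪ν, x⟫| + ε) ^ (1 - β) ≤ 2 := by
      calc (|⟪ν, x⟫| + ε) ^ (1 - β) ≤ (2:ℝ) ^ (1 - β) := by gcongr; linarith
        _ ≤ 2 ^ (1:ℝ) := Real.rpow_le_rpow_of_exponent_le (by linarith) (by linarith)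
        _ = 2 := by simp
    have : C * (|⟪ν, x⟫| + ε) ^ (1 - β) ≤ C * 2 := by gcongr
    linarith
  have hWtop : ∀ x ∈ Ks, ⟪ν, x⟫ = 1 → cp - η ≤ W x := by
    intro x hx h1
    have h2 := (abs_le.1 (hr.near x (hKn x hx))).1
    rw [h1] at h2
    have h3 : 1 - ε ≤ (r x + e) ^ (1 - β) := by
      calc 1 - ε = (1 - ε) ^ (1:ℝ) := by simp
        _ ≤ (1 - ε) ^ (1 - β) := Real.rpow_le_rpow_of_exponent_ge (by linarith) (by linarith) (by linarith)
        _ ≤ _ := Real.rpow_le_rpow (by linarith) (by linarith) h1β.le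
    have h4 : μ * cp * (1 - ε) ≤ μ * cp * (r x + e) ^ (1 - β) := by gcongr
    have h5 : μ * cp * ε ≤ cp * ε := by
      gcongr
      exact mul_le_of_le_one_left hcp0.le hμ1.le
    have h6 : 0 ≤ κ * ‖x - b‖ ^ 2 := by positivity
    simp only [hW]
    linarith
  have hstrict : ∀ x ∈ Ks, x ∈ D → ∃ V Λ, Jet W x V Λ ∧ Λ + ‖V‖ ^ p < -ε := by
    intro x hx hxD
    obtain ⟨v, Lr, hJ, hv, hLr⟩ := hr.jet x (hKn x hx)
    have hrx := hr.pos x hxD (hKn x hx)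
    have hpr : ∀ y, 0 < y + e → _ := fun y hy =>
      profile (p := p) (k := -(μ * cp * e ^ (1 - β))) (τ := y) (e := e) hβ hβ1 hβp hμ hy
    have J1 := hJ.comp
        (by
          have : ∀ᶠ y in nhds (r x), 0 < y + e :=
            (isOpen_lt continuous_const (by fun_prop)).mem_nhds (show 0 < r x + e by linarith)
          filter_upwards [this] with y hy
          exact (hpr y hy).1) (hpr _ (by linarith)).2
    have J2 := J1.add ((Jet.normSq (x := x) b).const_mul κ)
    refine ⟨_, _, J2, ?_⟩
    have hm' : μ ^ (1 - p) = 1 + m := by rw [hm]; ring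
    rw [hm']
    apply low_interior hp hν hm0 hK hκ hε hε1 c3 c4 c5 hd10 _ hv hLr hx.2.2
    rw [hd1]
    have h2 := (abs_le.1 (hr.near x (hKn x hx))).2
    have h3 := hx.2.1
    apply mul_le_mul_of_nonneg_left _ (by positivity)
    apply Real.rpow_le_rpow_of_nonpos (by linarith) (by linarith) (by linarith)
  have hnb : ∀ x, x ∈ D → ⟪ν, x⟫ < 1 → ‖x - b‖ < K → Ks ∈ nhds x := by
    intro x h1 h2 h3
    have o1 : ∀ᶠ z in nhds x, z ∈ D := hN.op.mem_nhds h1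
    have o2 : ∀ᶠ z in nhds x, ⟪ν, z⟫ < 1 :=
      (isOpen_lt (by fun_prop) continuous_const).mem_nhds h2
    have o3 : ∀ᶠ z in nhds x, ‖z - b‖ < K :=
      (isOpen_lt (by fun_prop) continuous_const).mem_nhds h3
    filter_upwards [o1, o2, o3] with z z1 z2 z3
    exact ⟨hN.sub z1, z2.le, z3.le⟩
  have hWn : ∀ x ∈ Ks, 0 ≤ W x := fun x hx => (by positivity : 0 ≤ κ * ‖x - b‖ ^ 2).trans (hW0 x hx)
  have up : ∀ x ∈ Ks, w x - W x ≤ 0 := by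
    apply max_principle_soft (φ := fun x => w x - W x) hKc (hwc.sub hWc)
    intro x hx hmax
    by_cases hxD : x ∈ D
    swap
    · rw [hN.zero x hx.1 hxD]; linarith [hWn x hx]
    rcases hx.2.2.eq_or_lt with h3 | h3
    · have := hW0 x hx
      rw [h3] at this
      linarith [(abs_le.1 (hwb x hx)).2]
    rcases hx.2.1.eq_or_lt with h2 | h2
    · linarith [htop x h2 (hKn x hx), hWtop x hx h2]
    exfalso
    obtain ⟨V, Λ, JW, hΛ⟩ := hstrict x hx hxD
    obtain ⟨L, Jw, hL⟩ := hN.jet x hxD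
    obtain ⟨g1, g2⟩ := (Jw.sub JW).isLocalMax (hmax.isLocalMax (hnb x hxD h2 h3))
    rw [← sub_eq_zero.1 g1] at hΛ
    linarith [(abs_le.1 hL).1]
  have lo : ∀ x ∈ Ks, (-1) * w x - A0 * W x ≤ 0 := by
    apply max_principle_soft (φ := fun x => (-1) * w x - A0 * W x) hKc ((continuousOn_const.mul hwc).sub (continuousOn_const.mul hWc))
    intro x hx hmax
    have hA3 : W x ≤ A0 * W x := le_mul_of_one_le_left (hWn x hx) hA1
    by_cases hxD : x ∈ D
    swap
    · rw [hN.zero x hx.1 hxD]; linarith [hWn x hx]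
    rcases hx.2.2.eq_or_lt with h3 | h3
    · have := hW0 x hx
      rw [h3] at this
      linarith [(abs_le.1 (hwb x hx)).1]
    rcases hx.2.1.eq_or_lt with h2 | h2
    · have : A0 * (cp - η) ≤ A0 * W x := by
        apply mul_le_mul_of_nonneg_left (hWtop x hx h2) (by linarith)
      linarith [(abs_le.1 (hwb x hx)).1]
    exfalso
    obtain ⟨V, Λ, JW, hΛ⟩ := hstrict x hx hxD
    obtain ⟨L, Jw, hL⟩ := hN.jet x hxD
    obtain ⟨g1, g2⟩ := ((Jw.const_mul (-1)).sub (JW.const_mul A0)).isLocalMax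
      (hmax.isLocalMax (hnb x hxD h2 h3))
    have h5 : 0 ≤ ‖V‖ ^ p := by positivity
    have h6 : 0 ≤ ‖g x‖ ^ p := by positivity
    have h7 : A0 * Λ < A0 * (-ε) := by
      apply mul_lt_mul_of_pos_left _ (by linarith)
      linarith
    have h8 : ε ≤ A0 * ε := le_mul_of_one_le_left hε.le hA1
    linarith [(abs_le.1 hL).2]
  intro x hxc hxb
  have hb0 := hN.out b hbD (by linarith)
  have hx1 : ⟪ν, x⟫ ≤ 1 := by
    have : ⟪ν, x - b⟫ ≤ ‖x - b‖ := (le_abs_self _).trans (abs_inner_le_of_unit hν)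
    rw [inner_sub_right] at this
    linarith
  have hx : x ∈ Ks := ⟨hxc, hx1, by linarith⟩
  have hWb : W x ≤ (μ * cp * (e ^ (1 - β) / e) * 2 + κ) * ‖x - b‖ := by
    have h1 := rpow_sub_le h1β (by linarith) he (hr0 x hx)
    have h2 := defn_lip hr hν (by linarith) (hKn x hx) (by linarith : ‖b‖ ≤ K + 1)
    rw [hr.zero b hbc hbD (by linarith), sub_zero] at h2
    have h3 : (r x + e) ^ (1 - β) - e ^ (1 - β) ≤ e ^ (1 - β) / e * (2 * ‖x - b‖) := by
      refine h1.trans ?_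
      gcongr
    have h4 : μ * cp * ((r x + e) ^ (1 - β) - e ^ (1 - β)) ≤ μ * cp * (e ^ (1 - β) / e * (2 * ‖x - b‖)) := by
      gcongr
    have h5 : κ * ‖x - b‖ ^ 2 ≤ κ * ‖x - b‖ := by
      gcongr
      have := norm_nonneg (x - b)
      nlinarith
    simp only [hW]
    linarith
  have f1 := up x hx
  have f2 := lo x hx
  have f3 : W x ≤ A0 * W x := le_mul_of_one_le_left (hWn x hx) hA1
  have f4 : A0 * W x ≤ A0 * ((μ * cp * (e ^ (1 - β) / e) * 2 + κ) * ‖x - b‖) := by gcongr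
  rw [mul_assoc]
  exact abs_le.2 ⟨by linarith, by linarith⟩

end Lower

/-! ### Part 7: the slices of the solution -/

theorem sol_bd {n : ℕ} {Ω : Set (EuclideanSpace ℝ (Fin n))} {β C : ℝ}
    {w : EuclideanSpace ℝ (Fin n) → ℝ}
    {g : EuclideanSpace ℝ (Fin n) → EuclideanSpace ℝ (Fin n)} (hΩ : IsOpen Ω)
    (hne : (frontier Ω).Nonempty) (hβ : 0 < β) (hβ1 : β < 1) (hC : 0 ≤ C)
    (hcont : ContinuousOn w (closure Ω)) (hzero : ∀ x ∈ frontier Ω, w x = 0)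
    (hgr : ∀ x ∈ Ω, infDist x (frontier Ω) ≤ 1 → ‖g x‖ ≤ C * (infDist x (frontier Ω)) ^ (-β))
    (hG : ∀ x ∈ Ω, HasGradientAt w (g x) x) :
    ∀ x ∈ closure Ω, infDist x (frontier Ω) ≤ 1 →
      |w x| ≤ C / (1 - β) * (infDist x (frontier Ω)) ^ (1 - β) := by
  intro x hx hd1
  have hd0 : 0 ≤ infDist x (frontier Ω) := infDist_nonneg
  have hq : 0 < 1 - β := by linarith
  by_cases hxΩ : x ∈ Ω
  swap
  · rw [hzero x ⟨hx, by rwa [hΩ.interior_eq]⟩]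
    simp only [abs_zero]
    positivity
  obtain ⟨b, hb, hdb⟩ := (isClosed_frontier (s := Ω)).exists_infDist_eq_dist hne x
  set d := infDist x (frontier Ω) with hd
  have hbΩ : b ∉ Ω := fun h => by
    have := hb.2
    rw [hΩ.interior_eq] at this
    exact this h
  have hdpos : 0 < d := by
    rw [hdb]
    apply dist_pos.2
    rintro rfl
    exact hbΩ hxΩ
  set e := d⁻¹ • (x - b) with he
  have hxe : x = b + d • e := by
    rw [he, smul_smul, mul_inv_cancel₀ hdpos.ne', one_smul]; abel
  have hne1 : ‖e‖ = 1 := by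
    rw [he, norm_smul, norm_inv, Real.norm_of_nonneg hdpos.le, ← dist_eq_norm, ← hdb,
      inv_mul_cancel₀ hdpos.ne']
  have hdist : ∀ τ ≤ d, dist (b + τ • e) x = d - τ := by
    intro τ hτ
    rw [hxe, dist_add_left, dist_eq_norm, ← sub_smul, norm_smul, hne1, mul_one,
      Real.norm_eq_abs, abs_sub_comm, abs_of_nonneg (by linarith)]
  have hin : ∀ τ, 0 < τ → τ ≤ d → b + τ • e ∈ Ω := by
    intro τ h1 h2
    apply ball_infDist_subset hΩ hxΩ
    rw [mem_ball, hdist τ h2]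
    linarith
  have hinf : ∀ τ, 0 < τ → τ ≤ d → infDist (b + τ • e) (frontier Ω) = τ := by
    intro τ h1 h2
    apply le_antisymm
    · refine (infDist_le_dist_of_mem hb).trans ?_
      rw [dist_eq_norm, add_sub_cancel_left, norm_smul, hne1, mul_one, Real.norm_of_nonneg h1.le]
    · have := infDist_le_infDist_add_dist (s := frontier Ω) (x := x) (y := b + τ • e)
      rw [dist_comm, hdist τ h2] at this
      linarith
  have key : ∀ σ : ℝ, |σ| = 1 → σ * w x ≤ C / (1 - β) * d ^ (1 - β) := by
    intro σ hσ
    have hder : ∀ τ ∈ Ioo 0 d, HasDerivAt (fun τ : ℝ => C / (1 - β) * τ ^ (1 - β) - σ * w (b + τ • e))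
        (C * τ ^ (-β) - σ * ⟪g (b + τ • e), e⟫) τ := by
      intro τ hτ
      have h1 : HasDerivAt (fun τ : ℝ => τ ^ (1 - β)) ((1 - β) * τ ^ (1 - β - 1)) τ :=
        Real.hasDerivAt_rpow_const (Or.inl hτ.1.ne')
      have h2 : HasDerivAt (fun τ : ℝ => b + τ • e) e τ := by
        simpa using ((hasDerivAt_id τ).smul_const e).const_add b
      have h3 := (hG _ (hin τ hτ.1 hτ.2.le)).hasFDerivAt.comp_hasDerivAt τ h2
      have h4 := (h1.const_mul (C / (1 - β))).sub (h3.const_mul σ)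
      refine h4.congr_deriv ?_
      rw [show 1 - β - 1 = -β by ring]
      simp only [InnerProductSpace.toDual_apply_apply]
      field_simp
    have hmono : MonotoneOn (fun τ : ℝ => C / (1 - β) * τ ^ (1 - β) - σ * w (b + τ • e)) (Icc 0 d) := by
      apply monotoneOn_of_deriv_nonneg (convex_Icc 0 d)
      · apply ContinuousOn.sub
        · apply ContinuousOn.mul continuousOn_const
          exact (Real.continuous_rpow_const hq.le).continuousOn
        · apply ContinuousOn.mul continuousOn_const
          apply hcont.comp (by fun_prop)
          intro τ hτ
          rcases hτ.1.eq_or_lt with h | h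
          · simp only [← h, zero_smul, add_zero]
            exact hb.1
          · exact subset_closure (hin τ h hτ.2)
      · rw [interior_Icc]
        exact fun τ hτ => (hder τ hτ).differentiableAt.differentiableWithinAt
      · rw [interior_Icc]
        intro τ hτ
        rw [(hder τ hτ).deriv]
        have h1 := hgr _ (hin τ hτ.1 hτ.2.le) (by rw [hinf τ hτ.1 hτ.2.le]; linarith [hτ.2])
        rw [hinf τ hτ.1 hτ.2.le] at h1
        have h2 : σ * ⟪g (b + τ • e), e⟫ ≤ ‖g (b + τ • e)‖ := by
          refine (le_abs_self _).trans ?_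
          rw [abs_mul, hσ, one_mul]
          refine (abs_real_inner_le_norm _ _).trans ?_
          rw [hne1, mul_one]
        linarith
    have := hmono (left_mem_Icc.2 hdpos.le) (right_mem_Icc.2 hdpos.le) hdpos.le
    simp only [Real.zero_rpow hq.ne', zero_smul, add_zero, hzero b hb, ← hxe] at this
    linarith
  rw [abs_le]
  have h1 := key 1 (by norm_num)
  have h2 := key (-1) (by norm_num)
  constructor <;> linarith

theorem sol_slices {n : ℕ} {p β : ℝ} (hβ : 0 < β) (hβ1 : β < 1)
    {Ω : Set (EuclideanSpace ℝ (Fin n))} (hΩ : IsOpen Ω) (hne : (frontier Ω).Nonempty)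
    {T : ℝ} (hT : 0 < T)
    {u : EuclideanSpace ℝ (Fin n) → ℝ → ℝ}
    {G : EuclideanSpace ℝ (Fin n) → ℝ → EuclideanSpace ℝ (Fin n)}
    {H : EuclideanSpace ℝ (Fin n) → ℝ → (EuclideanSpace ℝ (Fin n) →L[ℝ] EuclideanSpace ℝ (Fin n))}
    {u' : EuclideanSpace ℝ (Fin n) → ℝ → ℝ}
    (hu_cont : ContinuousOn (fun q : EuclideanSpace ℝ (Fin n) × ℝ => u q.1 q.2)
      (closure Ω ×ˢ Icc 0 T))
    (hu_bd : ∀ b ∈ frontier Ω, ∀ t ∈ Icc (0 : ℝ) T, u b t = 0)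
    (hG2 : ∀ t ∈ Ioc (0 : ℝ) T, ∀ x ∈ Ω, HasGradientAt (fun y => u y t) (G x t) x)
    (hH : ∀ t ∈ Ioc (0 : ℝ) T, ∀ x ∈ Ω, HasFDerivAt (fun y => G y t) (H x t) x)
    (hreg : ContinuousOn (fun q : EuclideanSpace ℝ (Fin n) × ℝ =>
      (u q.1 q.2, G q.1 q.2, H q.1 q.2, u' q.1 q.2)) (Ω ×ˢ Ioc 0 T))
    (hPDE : ∀ t ∈ Ioc (0 : ℝ) T, ∀ x ∈ Ω,
      u' x t - ∑ i : Fin n, ⟪H x t (EuclideanSpace.single i (1 : ℝ)),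
        EuclideanSpace.single i (1 : ℝ)⟫ = ‖G x t‖ ^ p)
    {M : ℝ} (hM : ∀ x ∈ Ω, ∀ t ∈ Icc (T / 2) T, |u' x t| ≤ M)
    {C₀ : ℝ} (hC₀ : ∀ x ∈ Ω, ∀ t ∈ Ico (0 : ℝ) T,
      ‖G x t‖ ≤ C₀ * ((infDist x (frontier Ω)) ^ (-β) + 1)) :
    ∃ C, 1 ≤ C ∧ ∀ t ∈ Icc (T / 2) T, Sol Ω p β (max M 0) C (fun x => u x t) (fun x => G x t) := by
  set C1 := 2 * max C₀ 1 with hC1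
  have hC1' : 2 ≤ C1 := by have := le_max_right C₀ 1; linarith
  have hq : 0 < 1 - β := by linarith
  have hq1 : 1 - β ≤ 1 := by linarith
  have hCC : C1 ≤ C1 / (1 - β) := by
    rw [le_div_iff₀ hq]; nlinarith
  have hgrT : ∀ x ∈ Ω, ‖G x T‖ ≤ C₀ * ((infDist x (frontier Ω)) ^ (-β) + 1) := by
    intro x hx
    have h1 : ContinuousWithinAt (fun t => G x t) (Ioc 0 T) T := by
      have h2 : ContinuousOn (fun t : ℝ => (u x t, G x t, H x t, u' x t)) (Ioc 0 T) :=
        hreg.comp (f := fun t : ℝ => (x, t)) (by fun_prop) (fun t ht => ⟨hx, ht⟩)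
      have h3 := h2 T ⟨hT, le_rfl⟩
      exact h3.snd.fst
    have h2 : Tendsto (fun t => ‖G x t‖) (nhdsWithin T (Ioo 0 T)) (nhds ‖G x T‖) :=
      (h1.mono Ioo_subset_Ioc_self).norm
    have : (nhdsWithin T (Ioo 0 T)).NeBot := right_nhdsWithin_Ioo_neBot hT
    apply le_of_tendsto h2
    filter_upwards [self_mem_nhdsWithin] with t ht
    exact hC₀ x hx t ⟨ht.1.le, ht.2⟩
  have hgr : ∀ t ∈ Icc (T / 2) T, ∀ x ∈ Ω, infDist x (frontier Ω) ≤ 1 →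
      ‖G x t‖ ≤ C1 * (infDist x (frontier Ω)) ^ (-β) := by
    intro t ht x hx hd
    have h0 : 0 < infDist x (frontier Ω) := by
      obtain ⟨b, hb⟩ := hne
      exact infDist_pos_of_mem hΩ hb hx
    have h1 : ‖G x t‖ ≤ C₀ * ((infDist x (frontier Ω)) ^ (-β) + 1) := by
      rcases ht.2.eq_or_lt with h | h
      · rw [h]; exact hgrT x hx
      · exact hC₀ x hx t ⟨by linarith [ht.1], h⟩
    have h2 : 1 ≤ (infDist x (frontier Ω)) ^ (-β) :=
      Real.one_le_rpow_of_pos_of_le_one_of_nonpos h0 hd (by linarith)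
    refine h1.trans ?_
    have h3 : C₀ * ((infDist x (frontier Ω)) ^ (-β) + 1) ≤
        max C₀ 1 * ((infDist x (frontier Ω)) ^ (-β) + 1) :=
      mul_le_mul_of_nonneg_right (le_max_left _ _) (by linarith)
    have h4 : max C₀ 1 * ((infDist x (frontier Ω)) ^ (-β) + 1) ≤
        max C₀ 1 * (2 * (infDist x (frontier Ω)) ^ (-β)) :=
      mul_le_mul_of_nonneg_left (by linarith) (by positivity)
    rw [hC1]; linarith
  refine ⟨C1 / (1 - β), by linarith, fun t ht => ?_⟩
  have ht0 : t ∈ Ioc 0 T := ⟨by linarith [ht.1], ht.2⟩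
  have hcont : ContinuousOn (fun x => u x t) (closure Ω) :=
    hu_cont.comp (f := fun x => (x, t)) (by fun_prop) (fun x hx => ⟨hx, ht0.1.le, ht0.2⟩)
  have hzero : ∀ x ∈ frontier Ω, u x t = 0 := fun x hx => hu_bd x hx t ⟨ht0.1.le, ht0.2⟩
  refine ⟨hcont, hzero, ?_, ?_, ?_⟩
  · exact sol_bd hΩ hne hβ hβ1 (by linarith) hcont hzero (hgr t ht) (hG2 t ht0)
  · intro x hx hd
    refine (hgr t ht x hx hd).trans ?_
    apply mul_le_mul_of_nonneg_right hCC
    exact Real.rpow_nonneg infDist_nonneg _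
  · intro x hx
    refine ⟨LinearMap.trace ℝ _ (H x t : EuclideanSpace ℝ (Fin n) →ₗ[ℝ] EuclideanSpace ℝ (Fin n)),
      ⟨fun y => G y t, H x t, ?_, hH t ht0 x hx, rfl, rfl⟩, ?_⟩
    · filter_upwards [hΩ.mem_nhds hx] with y hy
      exact hG2 t ht0 y hy
    · rw [LinearMap.trace_eq_sum_inner _ (EuclideanSpace.basisFun (Fin n) ℝ), ← hPDE t ht0 x hx]
      have : ∑ i : Fin n, ⟪(EuclideanSpace.basisFun (Fin n) ℝ) i, (H x t : EuclideanSpace ℝ (Fin n) →ₗ[ℝ] EuclideanSpace ℝ (Fin n)) ((EuclideanSpace.basisFun (Fin n) ℝ) i)⟫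
          = ∑ i : Fin n, ⟪H x t (EuclideanSpace.single i (1 : ℝ)),
        EuclideanSpace.single i (1 : ℝ)⟫ := by
        apply Finset.sum_congr rfl
        intro i _
        rw [real_inner_comm, EuclideanSpace.basisFun_apply]
        rfl
      rw [this]
      rw [add_sub_cancel]
      exact (hM x hx t ht).trans (le_max_left _ _)

/-! ### Part 8: boundedness of the gradient from linear growth, rescaled defining functions -/

theorem grad_step {n : ℕ} {p γ κ A C M : ℝ} (hp : 0 < p) (hγ : 0 ≤ γ) (hκ : 1 ≤ κ)
    (hκ2 : 1 + γ * p ≤ 2 * κ) (hA : 0 ≤ A) (hC : 0 ≤ C) (hM : 0 ≤ M) :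
    ∃ K, 0 ≤ K ∧ ∀ (Ω : Set (EuclideanSpace ℝ (Fin n))) (a : EuclideanSpace ℝ (Fin n)) (r : ℝ)
      (w : EuclideanSpace ℝ (Fin n) → ℝ)
      (g : EuclideanSpace ℝ (Fin n) → EuclideanSpace ℝ (Fin n)),
      IsOpen Ω → a ∈ frontier Ω → r ≤ 1 → ContinuousOn w (closure Ω) →
      (∀ x ∈ Ω, ∃ L, Jet w x (g x) L ∧ |L + ‖g x‖ ^ p| ≤ M) →
      (∀ x ∈ Ω, ‖x - a‖ ≤ r → |w x| ≤ A * infDist x (frontier Ω)) →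
      (∀ x ∈ Ω, ‖x - a‖ ≤ r → ‖g x‖ ≤ C * (infDist x (frontier Ω)) ^ (-γ)) →
      ∀ x ∈ Ω, ‖x - a‖ ≤ r / 2 → ‖g x‖ ≤ K * (infDist x (frontier Ω)) ^ (-(κ - 1)) := by
  set N := M + 1 + (C * 2 ^ γ) ^ p with hN
  have hN0 : 0 < N := by positivity
  refine ⟨n * (2 * A) * 2 + N / 4, by positivity, ?_⟩
  intro Ω a r w g hΩ ha hr hcont hjet hlin hgr x hx hxa
  set d := infDist x (frontier Ω) with hd
  have hd0 : 0 < d := infDist_pos_of_mem hΩ ha hx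
  have hda : d ≤ ‖x - a‖ := by
    rw [← dist_eq_norm]; exact infDist_le_dist_of_mem ha
  have hd1 : d ≤ 1 := by linarith
  have hκd : d ^ κ ≤ d := by
    calc d ^ κ ≤ d ^ (1 : ℝ) := Real.rpow_le_rpow_of_exponent_ge hd0 hd1 hκ
      _ = d := Real.rpow_one d
  have hκ0 : 0 < d ^ κ := by positivity
  have hy : ∀ y ∈ closedBall x (d ^ κ / 2), y ∈ Ω ∧ d / 2 ≤ infDist y (frontier Ω) ∧
      infDist y (frontier Ω) ≤ 2 * d ∧ ‖y - a‖ ≤ r := by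
    intro y hy
    rw [mem_closedBall] at hy
    have h1 := infDist_le_infDist_add_dist (s := frontier Ω) (x := x) (y := y)
    have h2 := infDist_le_infDist_add_dist (s := frontier Ω) (x := y) (y := x)
    rw [dist_comm] at h1
    refine ⟨ball_infDist_subset hΩ hx ?_, by linarith, by linarith, ?_⟩
    · rw [mem_ball]; linarith
    · have := dist_triangle y x a
      rw [dist_eq_norm y a, dist_eq_norm x a] at this
      linarith
  have hest := grad_est (φ := w) (x := x) (ρ := d ^ κ / 2) (S := A * (2 * d)) (N := N * d ^ (-(γ * p)))
    (v := g x) (L := (hjet x hx).choose) (by positivity) (by positivity)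
    (hcont.mono fun y h => subset_closure (hy y h).1)
    (fun y h => by
      obtain ⟨h1, h2, h3, h4⟩ := hy y h
      exact (hlin y h1 h4).trans (mul_le_mul_of_nonneg_left h3 hA))
    (fun y h => by
      obtain ⟨h1, h2, h3, h4⟩ := hy y h
      obtain ⟨L, hJ, hL⟩ := hjet y h1
      refine ⟨g y, L, hJ, ?_⟩
      have e1 : ‖g y‖ ≤ C * 2 ^ γ * d ^ (-γ) := by
        refine (hgr y h1 h4).trans ?_
        rw [mul_assoc]
        apply mul_le_mul_of_nonneg_left _ hC
        refine (Real.rpow_le_rpow_of_nonpos (by positivity) h2 (by linarith)).trans_eq ?_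
        rw [Real.div_rpow hd0.le (by norm_num), Real.rpow_neg (by norm_num : (0:ℝ) ≤ 2)]
        field_simp
      have e2 : ‖g y‖ ^ p ≤ (C * 2 ^ γ) ^ p * d ^ (-(γ * p)) := by
        refine (Real.rpow_le_rpow (norm_nonneg _) e1 hp.le).trans_eq ?_
        rw [Real.mul_rpow (by positivity) (by positivity), ← Real.rpow_mul hd0.le]
        ring_nf
      have e3 : 1 ≤ d ^ (-(γ * p)) :=
        Real.one_le_rpow_of_pos_of_le_one_of_nonpos hd0 hd1 (by
          have := mul_nonneg hγ hp.le; linarith)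
      have e4 : 0 ≤ ‖g y‖ ^ p := by positivity
      have e5 : M + 1 ≤ (M + 1) * d ^ (-(γ * p)) := le_mul_of_one_le_right (by linarith) e3
      rw [abs_le] at hL
      rw [abs_lt, hN, add_mul]
      constructor <;> linarith)
    (hjet x hx).choose_spec.1
  refine hest.trans ?_
  have f1 : n * (A * (2 * d)) / (d ^ κ / 2) = n * (2 * A) * 2 * d ^ (-(κ - 1)) := by
    rw [neg_sub, Real.rpow_sub hd0, Real.rpow_one]
    field_simp
  have f2 : N * d ^ (-(γ * p)) * (d ^ κ / 2) / 2 ≤ N / 4 * d ^ (-(κ - 1)) := by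
    have : d ^ (-(γ * p)) * d ^ κ ≤ d ^ (-(κ - 1)) := by
      rw [← Real.rpow_add hd0]
      exact Real.rpow_le_rpow_of_exponent_ge hd0 hd1 (by linarith)
    have := mul_le_mul_of_nonneg_left this (by positivity : 0 ≤ N / 4)
    linarith
  rw [f1, add_mul]
  linarith

theorem grad_bdd {n : ℕ} {p β A C M : ℝ} (hp : 0 < p) (hβ : 0 < β) (hβ1 : β < 1)
    (hβp : β * (p - 1) = 1) (hA : 0 ≤ A) (hC : 0 ≤ C) (hM : 0 ≤ M) :
    ∃ K, 0 ≤ K ∧ ∀ (Ω : Set (EuclideanSpace ℝ (Fin n))) (a : EuclideanSpace ℝ (Fin n)) (r : ℝ)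
      (w : EuclideanSpace ℝ (Fin n) → ℝ)
      (g : EuclideanSpace ℝ (Fin n) → EuclideanSpace ℝ (Fin n)),
      IsOpen Ω → a ∈ frontier Ω → 0 < r → r ≤ 1 → Sol Ω p β M C w g →
      (∀ x ∈ Ω, ‖x - a‖ ≤ r → |w x| ≤ A * infDist x (frontier Ω)) →
      ∀ x ∈ Ω, ‖x - a‖ ≤ r / 4 → ‖g x‖ ≤ K := by
  have hbp : β * p = 1 + β := by linarith
  obtain ⟨K1, hK1, h1⟩ := grad_step (n := n) (p := p) (γ := β) (κ := 1 + β / 2) (A := A) (C := C)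
    (M := M) hp hβ.le (by linarith) (by linarith) hA hC hM
  obtain ⟨K2, hK2, h2⟩ := grad_step (n := n) (p := p) (γ := β / 2) (κ := 1) (A := A) (C := K1)
    (M := M) hp (by linarith) le_rfl (by linarith) hA hK1 hM
  refine ⟨K2, hK2, ?_⟩
  intro Ω a r w g hΩ ha hr hr1 hS hlin x hx hxa
  have hd : ∀ y ∈ Ω, ‖y - a‖ ≤ r → infDist y (frontier Ω) ≤ 1 := by
    intro y hy hya
    refine (infDist_le_dist_of_mem ha).trans ?_
    rw [dist_eq_norm]; linarith
  have s1 := h1 Ω a r w g hΩ ha hr1 hS.cont hS.jet hlin (fun y hy hya => hS.gr y hy (hd y hy hya))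
  have s2 := h2 Ω a (r / 2) w g hΩ ha (by linarith) hS.cont hS.jet
    (fun y hy hya => hlin y hy (by linarith)) (fun y hy hya => by
      have := s1 y hy hya
      rwa [show -(1 + β / 2 - 1) = -(β / 2) by ring] at this) x hx (by linarith)
  simpa using s2

theorem defn_of {n : ℕ} {Ω : Set (EuclideanSpace ℝ (Fin n))} {a ν : EuclideanSpace ℝ (Fin n)}
    {r : EuclideanSpace ℝ (Fin n) → ℝ} {Lm : ℝ} (hΩ : IsOpen Ω) (ha : a ∈ frontier Ω)
    (h1 : ∀ᶠ x in nhds a, (x ∈ Ω ↔ 0 < r x) ∧ (x ∈ frontier Ω ↔ r x = 0))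
    (h2 : HasGradientAt r ν a)
    (h3 : ∀ ε > 0, ∀ᶠ x in nhds a, ∃ v L, Jet r x v L ∧ ‖v - ν‖ ≤ ε ∧ |L| ≤ Lm)
    {R ε : ℝ} (hR : 0 < R) (hε : 0 < ε) :
    ∃ s1 > 0, ∀ s, 0 < s → s < s1 → Defn ν R ε ((fun y => a + s • y) ⁻¹' Ω)
      ((fun y => a + s • y) ⁻¹' closure Ω) (fun y => s⁻¹ * r (a + s • y)) := by
  have hra : r a = 0 := (h1.self_of_nhds).2.1 ha
  have h4 : ∀ᶠ x in nhds a, |r x - ⟪ν, x - a⟫| ≤ ε / R * ‖x - a‖ := by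
    have := (gradAt_fd h2).isLittleO.def (show 0 < ε / R by positivity)
    filter_upwards [this] with x hx
    simpa [hra] using hx
  obtain ⟨ρ, hρ, hball⟩ := Metric.eventually_nhds_iff.1 (h1.and ((h3 ε hε).and h4))
  refine ⟨min (ρ / (2 * R)) (ε / (|Lm| + 1)), by positivity, ?_⟩
  intro s hs hs1
  have hsa : s < ρ / (2 * R) := hs1.trans_le (min_le_left _ _)
  have hsb : s < ε / (|Lm| + 1) := hs1.trans_le (min_le_right _ _)
  rw [lt_div_iff₀ (by positivity)] at hsa hsb
  have hB : ∀ x : EuclideanSpace ℝ (Fin n), ‖x‖ ≤ R → dist (a + s • x) a < ρ := by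
    intro x hx
    rw [dist_eq_norm, add_sub_cancel_left, norm_smul, Real.norm_of_nonneg hs.le]
    have := mul_le_mul_of_nonneg_left hx hs.le
    nlinarith
  refine ⟨?_, ?_, ?_, ?_⟩
  · intro x hx
    obtain ⟨v, L, hJ, hv, hL⟩ := (hball (hB x hx)).2.1
    refine ⟨_, _, (hJ.scale).const_mul s⁻¹, ?_, ?_⟩
    · rwa [smul_smul, inv_mul_cancel₀ hs.ne', one_smul]
    · rw [show s⁻¹ * (s ^ 2 * L) = s * L by field_simp, abs_mul, abs_of_pos hs]
      have : |L| ≤ |Lm| + 1 := by linarith [le_abs_self Lm]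
      nlinarith
  · intro x hxD hx
    have := (hball (hB x hx)).1.1.1 hxD
    positivity
  · intro x hxc hxD hx
    have : a + s • x ∈ frontier Ω := ⟨hxc, by rw [hΩ.interior_eq]; exact hxD⟩
    simp only [(hball (hB x hx)).1.2.1 this, mul_zero]
  · intro x hx
    have := (hball (hB x hx)).2.2
    rw [add_sub_cancel_left, inner_smul_right, norm_smul, Real.norm_of_nonneg hs.le] at this
    have e1 : s⁻¹ * r (a + s • x) - ⟪ν, x⟫ = s⁻¹ * (r (a + s • x) - s * ⟪ν, x⟫) := by
      field_simp
    rw [e1, abs_mul, abs_of_pos (inv_pos.2 hs), inv_mul_le_iff₀ hs]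
    refine this.trans ?_
    have e2 : ε / R * (s * ‖x‖) ≤ ε / R * (s * R) := by gcongr
    refine e2.trans_eq ?_
    field_simp

/-! ### Part 9: the lower bound at a blow-up point -/

theorem low_scaled {n : ℕ} (hn : 1 ≤ n) {p β M C η : ℝ} (hp : 2 < p) (hβ : 0 < β) (hβ1 : β < 1)
    (hβp : β * (p - 1) = 1) (hM : 0 ≤ M) (hC : 1 ≤ C) (hη : 0 < η) (hη1 : η < β ^ β / (1 - β))
    {Ω : Set (EuclideanSpace ℝ (Fin n))} (hΩ : IsOpen Ω) {a ν : EuclideanSpace ℝ (Fin n)}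
    (ha : a ∈ frontier Ω) (hν : ‖ν‖ = 1) (hfl : FlatAt Ω a ν)
    {r : EuclideanSpace ℝ (Fin n) → ℝ} {Lm : ℝ}
    (h1 : ∀ᶠ x in nhds a, (x ∈ Ω ↔ 0 < r x) ∧ (x ∈ frontier Ω ↔ r x = 0))
    (h2 : HasGradientAt r ν a)
    (h3 : ∀ ε > 0, ∀ᶠ x in nhds a, ∃ v L, Jet r x v L ∧ ‖v - ν‖ ≤ ε ∧ |L| ≤ Lm) :
    ∃ s1 > 0, ∃ A > 0, ∀ s, 0 < s → s < s1 → ∀ w g w0 g0, Sol Ω p β M C w g → Sol Ω p β M C w0 g0 →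
      s ^ (-(1 - β)) * w0 (a + s • ν) ≤ β ^ β / (1 - β) - 3 * η →
      (∀ x ∈ Ω, |w x - w0 x| ≤ η * s ^ (1 - β)) →
      ∀ b ∈ frontier Ω, ‖b - a‖ ≤ s → ∀ x ∈ closure Ω, ‖x - b‖ ≤ s / 4 →
        |w x| ≤ A * s ^ (-β) * ‖x - b‖ := by
  obtain ⟨R1, hR1, ε1, hε1, A, hA, hlow⟩ := low_est (n := n) (ν := ν) (p := p) (C := 2 * C) hν hp hβ hβ1 hβp
    (by linarith) hη hη1
  obtain ⟨R2, hR2, ε2, hε2, htan⟩ := tan_est (n := n) (ν := ν) (p := p) (C := 2 * C) (K := R1 + 1)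
    hn hν hp hβ hβ1 (by linarith) hη (by linarith)
  obtain ⟨t1, ht1, hdef⟩ := defn_of hΩ ha h1 h2 h3 hR1 hε1
  set ε := min (min ε1 ε2) (1 / 2) with hε
  have hε0 : 0 < ε := by positivity
  set R := max R1 R2 with hR
  have hR0 : 0 < R := lt_max_of_lt_left hR1
  obtain ⟨t2, ht2, hnear⟩ := near_of_sol (ε := ε) (R := R) (M := M) (C := C) (p := p) hΩ hfl hν hp hβ hβ1 hβp hM hC hR0 hε0
  refine ⟨min t1 t2, by positivity, A, hA, ?_⟩
  intro s hs hs1 w g w0 g0 hw hw0 hval hclose b hb hba x hx hxb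
  have hN := hnear s hs (hs1.trans_le (min_le_right _ _)) w g hw
  have hN0 := hnear s hs (hs1.trans_le (min_le_right _ _)) w0 g0 hw0
  have hD := hdef s hs (hs1.trans_le (min_le_left _ _))
  have hN1 := hN.mono (by linarith) hβ1 hε0 (le_max_left R1 R2) ((min_le_left _ _).trans (min_le_left _ _))
  have hN2 := hN0.mono (by linarith) hβ1 hε0 (le_max_right R1 R2) ((min_le_left _ _).trans (min_le_right _ _))
  have hνν : ⟪ν, ν⟫ = (1 : ℝ) := by rw [real_inner_self_eq_norm_sq, hν]; norm_num
  have hss : s ^ (-(1 - β)) * s ^ (1 - β) = 1 := by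
    rw [← Real.rpow_add hs]; simp
  have htop : ∀ y, ⟪ν, y⟫ = (1 : ℝ) → ‖y‖ ≤ R1 →
      s ^ (-(1 - β)) * w (a + s • y) ≤ β ^ β / (1 - β) - η := by
    intro y hy hyR
    have hyΩ : a + s • y ∈ Ω := by
      by_contra hcon
      have := hN.out y hcon (hyR.trans (le_max_left _ _))
      have : ε ≤ 1 / 2 := min_le_right _ _
      linarith
    have e1 := htan _ _ _ _ hN2 ν (y - ν) hνν (by rw [inner_sub_right, hy, hνν]; ring)
      (by rw [hν]; linarith) ((norm_sub_le _ _).trans (by rw [hν]; linarith))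
    simp only [add_sub_cancel] at e1
    have e2 := (abs_le.1 (hclose _ hyΩ)).2
    have e3 : 0 < s ^ (-(1 - β)) := by positivity
    have e4 := mul_le_mul_of_nonneg_left e2 e3.le
    have e5 : s ^ (-(1 - β)) * (η * s ^ (1 - β)) = η := by
      rw [mul_left_comm, hss, mul_one]
    rw [e5, mul_sub] at e4
    linarith
  have hback : ∀ z : EuclideanSpace ℝ (Fin n), a + s • (s⁻¹ • (z - a)) = z := by
    intro z
    rw [smul_smul, mul_inv_cancel₀ hs.ne', one_smul]; abel
  have hnrm : ∀ z : EuclideanSpace ℝ (Fin n), ‖s⁻¹ • z‖ = ‖z‖ / s := by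
    intro z
    rw [norm_smul, norm_inv, Real.norm_of_nonneg hs.le]; ring
  have hsub : s⁻¹ • (x - a) - s⁻¹ • (b - a) = s⁻¹ • (x - b) := by
    rw [← smul_sub]; congr 1; abel
  have key := hlow _ _ _ _ _ hN1 hD htop (s⁻¹ • (b - a))
    (by show a + s • (s⁻¹ • (b - a)) ∈ closure Ω; rw [hback]; exact hb.1)
    (by
      show a + s • (s⁻¹ • (b - a)) ∉ Ω
      rw [hback]
      have := hb.2
      rwa [hΩ.interior_eq] at this)
    (by rw [hnrm, div_le_one hs]; exact hba)
    (s⁻¹ • (x - a))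
    (by show a + s • (s⁻¹ • (x - a)) ∈ closure Ω; rw [hback]; exact hx)
    (by rw [hsub, hnrm, div_le_iff₀ hs]; linarith)
  simp only [hback] at key
  rw [hsub, hnrm, abs_mul, abs_of_pos (by positivity : 0 < s ^ (-(1 - β)))] at key
  have e6 : s ^ (1 - β) = s * s ^ (-β) := by
    rw [sub_eq_add_neg, Real.rpow_add hs, Real.rpow_one]
  have e7 := mul_le_mul_of_nonneg_left key (by positivity : 0 ≤ s ^ (1 - β))
  rw [← mul_assoc, mul_comm (s ^ (1 - β)) (s ^ (-(1 - β))), hss, one_mul] at e7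
  refine e7.trans_eq ?_
  rw [e6]
  field_simp

theorem lower_bound {n : ℕ} (hn : 1 ≤ n) {p β M C η : ℝ} (hp : 2 < p) (hβ : 0 < β) (hβ1 : β < 1)
    (hβp : β * (p - 1) = 1) (hM0 : 0 ≤ M) (hC : 1 ≤ C) (hη : 0 < η) (hη1 : η < β ^ β / (1 - β))
    {Ω : Set (EuclideanSpace ℝ (Fin n))} (hΩ : IsOpen Ω) {a ν : EuclideanSpace ℝ (Fin n)}
    (ha : a ∈ frontier Ω) (hν : ‖ν‖ = 1) (hfl : FlatAt Ω a ν)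
    {r : EuclideanSpace ℝ (Fin n) → ℝ} {Lm : ℝ}
    (h1 : ∀ᶠ x in nhds a, (x ∈ Ω ↔ 0 < r x) ∧ (x ∈ frontier Ω ↔ r x = 0))
    (h2 : HasGradientAt r ν a)
    (h3 : ∀ ε > 0, ∀ᶠ x in nhds a, ∃ v L, Jet r x v L ∧ ‖v - ν‖ ≤ ε ∧ |L| ≤ Lm)
    {T : ℝ} (hT : 0 < T)
    {u : EuclideanSpace ℝ (Fin n) → ℝ → ℝ}
    {G : EuclideanSpace ℝ (Fin n) → ℝ → EuclideanSpace ℝ (Fin n)}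
    {u' : EuclideanSpace ℝ (Fin n) → ℝ → ℝ}
    (hu' : ∀ t ∈ Ioc (0 : ℝ) T, ∀ x ∈ Ω, HasDerivAt (fun s => u x s) (u' x t) t)
    (hM : ∀ x ∈ Ω, ∀ t ∈ Icc (T / 2) T, |u' x t| ≤ M)
    (hS : ∀ t ∈ Icc (T / 2) T, Sol Ω p β M C (fun x => u x t) (fun x => G x t))
    (hGBU : ∀ K : ℝ, ∀ η > 0, ∃ x ∈ Ω, ∃ t ∈ Ioo (T - η) T,
      0 < t ∧ dist x a < η ∧ K ≤ ‖G x t‖) :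
    ∃ s1 > 0, ∀ s : ℝ, 0 < s → s < s1 →
      β ^ β / (1 - β) - 3 * η ≤ s ^ (-(1 - β)) * u (a + s • ν) T := by
  obtain ⟨s1, hs1, A, hA, hlow⟩ := low_scaled (M := M) (C := C) (p := p) hn hp hβ hβ1 hβp hM0 hC hη hη1 hΩ ha hν hfl
    h1 h2 h3
  refine ⟨min s1 1, by positivity, ?_⟩
  intro s hs hss
  by_contra! hcon
  have hs1' : s < s1 := hss.trans_le (min_le_left _ _)
  have hs2 : s < 1 := hss.trans_le (min_le_right _ _)
  have hTT : T ∈ Icc (T / 2) T := ⟨by linarith, le_rfl⟩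
  have hlip : ∀ x ∈ Ω, ∀ t ∈ Icc (T / 2) T, |u x t - u x T| ≤ M * (T - t) := by
    intro x hx t ht
    have := (convex_Icc (T / 2) T).norm_image_sub_le_of_norm_hasDerivWithin_le
      (f := fun t => u x t) (f' := fun t => u' x t) (C := M)
      (fun z hz => (hu' z ⟨by linarith [hz.1], hz.2⟩ x hx).hasDerivWithinAt)
      (fun z hz => hM x hx z hz) hTT ht
    rw [Real.norm_eq_abs, Real.norm_eq_abs, abs_sub_comm t T, abs_of_nonneg (by linarith [ht.2] : 0 ≤ T - t)] at this
    exact this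
  set A' := A * s ^ (-β) with hA'
  obtain ⟨K, hK, hbd⟩ := grad_bdd (n := n) (p := p) (β := β) (A := A') (C := C) (M := M) (by linarith)
    hβ hβ1 hβp (by positivity) (by linarith) hM0
  set η1 := min (min (T / 2) (η * s ^ (1 - β) / (M + 1))) (s / 32) with hη1'
  have hη10 : 0 < η1 := by positivity
  obtain ⟨x, hx, t, ht, ht0, hxa, hKx⟩ := hGBU (K + 1) η1 hη10
  have l1 : η1 ≤ T / 2 := (min_le_left _ _).trans (min_le_left _ _)
  have l2 : η1 ≤ η * s ^ (1 - β) / (M + 1) := (min_le_left _ _).trans (min_le_right _ _)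
  have l3 : η1 ≤ s / 32 := min_le_right _ _
  have ht' : t ∈ Icc (T / 2) T := ⟨by linarith [ht.1], ht.2.le⟩
  have hlin := hlow s hs hs1' _ _ _ _ (hS t ht') (hS T hTT) hcon.le (fun z hz => by
    refine (hlip z hz t ht').trans ?_
    rw [le_div_iff₀ (by positivity)] at l2
    nlinarith [ht.1, ht.2])
  have := hbd Ω a (s / 8) (fun x => u x t) (fun x => G x t) hΩ ha (by positivity) (by linarith) (hS t ht')
    (fun y hy hya => by
      obtain ⟨b, hb, hdb⟩ := (isClosed_frontier (s := Ω)).exists_infDist_eq_dist ⟨a, ha⟩ y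
      have e1 : infDist y (frontier Ω) ≤ ‖y - a‖ := by
        rw [← dist_eq_norm]; exact infDist_le_dist_of_mem ha
      have e2 : ‖y - b‖ = infDist y (frontier Ω) := by rw [← dist_eq_norm, hdb]
      have e3 : ‖b - a‖ ≤ s := by
        have := dist_triangle b y a
        rw [dist_comm b y, ← hdb, dist_eq_norm, dist_eq_norm] at this
        linarith
      have := hlin b hb e3 y (subset_closure hy) (by rw [e2]; linarith)
      rwa [e2] at this) x hx (by rw [← dist_eq_norm]; linarith)
  linarith

/-! ### Part 10: the final profile -/

theorem prof_line {n : ℕ} (hn : 1 ≤ n) {p β M C : ℝ} (hp : 2 < p) (hβ : 0 < β) (hβ1 : β < 1)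
    (hβp : β * (p - 1) = 1) (hM : 0 ≤ M) (hC : 1 ≤ C)
    {Ω : Set (EuclideanSpace ℝ (Fin n))} (hΩ : IsOpen Ω) {a ν : EuclideanSpace ℝ (Fin n)}
    (hν : ‖ν‖ = 1) (hfl : FlatAt Ω a ν)
    {w : EuclideanSpace ℝ (Fin n) → ℝ} {g : EuclideanSpace ℝ (Fin n) → EuclideanSpace ℝ (Fin n)}
    (hS : Sol Ω p β M C w g)
    (hL : ∀ η > 0, ∃ s1 > 0, ∀ s : ℝ, 0 < s → s < s1 →
      β ^ β / (1 - β) - η ≤ s ^ (-(1 - β)) * w (a + s • ν)) {η : ℝ} (hη : 0 < η) :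
    ∃ s1 > 0, ∀ s : ℝ, 0 < s → s < s1 → ∀ x, ⟪ν, x⟫ = (1 : ℝ) → ‖x‖ ≤ 3 →
      |s ^ (-(1 - β)) * w (a + s • x) - β ^ β / (1 - β)| ≤ η := by
  obtain ⟨R1, hR1, ε1, hε1, hup⟩ := up_est (n := n) (ν := ν) (p := p) (C := 2 * C) (η := η / 2) hn hν hp hβ hβ1 hβp
    (by linarith) (by linarith)
  obtain ⟨R2, hR2, ε2, hε2, htan⟩ := tan_est (n := n) (ν := ν) (p := p) (C := 2 * C) (K := 4) (η := η / 2)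
    hn hν hp hβ hβ1 (by linarith) (by linarith) (by linarith)
  obtain ⟨t1, ht1, hlow⟩ := hL (η / 2) (by linarith)
  obtain ⟨t2, ht2, hnear⟩ := near_of_sol (ε := min ε1 ε2) (R := max R1 R2) (M := M) (C := C) (p := p)
    hΩ hfl hν hp hβ hβ1 hβp hM hC (lt_max_of_lt_left hR1) (lt_min hε1 hε2)
  refine ⟨min t1 t2, by positivity, ?_⟩
  intro s hs hs1 x hx hxn
  have hN := hnear s hs (hs1.trans_le (min_le_right _ _)) w g hS
  have hN1 := hN.mono (by linarith) hβ1 (lt_min hε1 hε2) (le_max_left R1 R2) (min_le_left _ _)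
  have hN2 := hN.mono (by linarith) hβ1 (lt_min hε1 hε2) (le_max_right R1 R2) (min_le_right _ _)
  have hνν : ⟪ν, ν⟫ = (1 : ℝ) := by rw [real_inner_self_eq_norm_sq, hν]; norm_num
  have e1 := hup _ _ _ _ hN1
  have e2 := hlow s hs (hs1.trans_le (min_le_left _ _))
  have e3 := htan _ _ _ _ hN2 ν (x - ν) hνν (by rw [inner_sub_right, hx, hνν]; ring)
      (by rw [hν]; linarith) ((norm_sub_le _ _).trans (by rw [hν]; linarith))
  have e4 := htan _ _ _ _ hN2 x (ν - x) hx (by rw [inner_sub_right, hx, hνν]; ring)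
      (by linarith) ((norm_sub_le _ _).trans (by rw [hν]; linarith))
  simp only [add_sub_cancel] at e3 e4
  rw [abs_le]
  constructor <;> linarith

theorem final_profile {n : ℕ} (hn : 1 ≤ n) {p β M C : ℝ} (hp : 2 < p) (hβ : 0 < β) (hβ1 : β < 1)
    (hβp : β * (p - 1) = 1) (hM : 0 ≤ M) (hC : 1 ≤ C)
    {Ω : Set (EuclideanSpace ℝ (Fin n))} (hΩ : IsOpen Ω) {a ν : EuclideanSpace ℝ (Fin n)}
    (hν : ‖ν‖ = 1) (hfl : FlatAt Ω a ν)
    {w : EuclideanSpace ℝ (Fin n) → ℝ} {g : EuclideanSpace ℝ (Fin n) → EuclideanSpace ℝ (Fin n)}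
    (hS : Sol Ω p β M C w g)
    (hL : ∀ η > 0, ∃ s1 > 0, ∀ s : ℝ, 0 < s → s < s1 →
      β ^ β / (1 - β) - η ≤ s ^ (-(1 - β)) * w (a + s • ν)) {ε : ℝ} (hε : 0 < ε) :
    ∃ s1 > 0, ∀ s : ℝ, 0 < s → s < s1 → ‖s ^ β • g (a + s • ν) - β ^ β • ν‖ < ε := by
  have hq : 0 < 1 - β := by linarith
  have hdp : 0 < β ^ β := by positivity
  set N := 2 + (4 * C) ^ p + (β ^ β * 2) ^ p with hN
  have hN0 : 0 < N := by positivity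
  set θ := min (1 / 2) (ε / (2 * N)) with hθ
  have hθ0 : 0 < θ := by positivity
  have hθ1 : θ ≤ 1 / 2 := min_le_left _ _
  have hθ2 : N * θ / 2 ≤ ε / 4 := by
    have : θ ≤ ε / (2 * N) := min_le_right _ _
    rw [le_div_iff₀ (by positivity)] at this
    linarith
  have hn0 : (0 : ℝ) < n := by exact_mod_cast hn
  set η := ε * θ / (8 * n) with hη
  have hη0 : 0 < η := by positivity
  have hη1 : n * (2 * η) / θ = ε / 4 := by rw [hη]; field_simp; norm_num
  obtain ⟨t1, ht1, hline⟩ := prof_line hn hp hβ hβ1 hβp hM hC hΩ hν hfl hS hL hη0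
  obtain ⟨t2, ht2, hnear⟩ := near_of_sol (ε := 1 / 4) (R := 2) (M := M) (C := C) (p := p)
    hΩ hfl hν hp hβ hβ1 hβp hM hC (by norm_num) (by norm_num)
  refine ⟨min (t1 / 2) t2, by positivity, ?_⟩
  intro s hs hs1
  have hs2 : s < t1 / 2 := hs1.trans_le (min_le_left _ _)
  have hNr := hnear s hs (hs1.trans_le (min_le_right _ _)) w g hS
  have hνν : ⟪ν, ν⟫ = (1 : ℝ) := by rw [real_inner_self_eq_norm_sq, hν]; norm_num
  have hgeo : ∀ y ∈ closedBall ν θ, 1 / 2 ≤ ⟪ν, y⟫ ∧ ⟪ν, y⟫ ≤ 3 / 2 ∧ ‖y‖ ≤ 3 / 2 ∧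
      a + s • y ∈ Ω := by
    intro y hy
    rw [mem_closedBall, dist_eq_norm] at hy
    have e1 := (abs_inner_le_of_unit (x := y - ν) hν).trans hy
    rw [inner_sub_right, hνν, abs_le] at e1
    have e2 : ‖y‖ ≤ 3 / 2 := by
      calc ‖y‖ = ‖ν + (y - ν)‖ := by congr 1; abel
        _ ≤ _ := (norm_add_le _ _).trans (by rw [hν]; linarith)
    refine ⟨by linarith, by linarith, e2, ?_⟩
    by_contra hcon
    have := hNr.out y hcon (by linarith)
    linarith
  have hjet : ∀ y ∈ closedBall ν θ, ∃ Lw, |Lw| < N ∧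
      Jet (fun y => s ^ (-(1 - β)) * w (a + s • y) - β ^ β / (1 - β) * ⟪ν, y⟫ ^ (1 - β)) y
        (s ^ β • g (a + s • y) - (β ^ β * ⟪ν, y⟫ ^ (-β)) • ν) Lw := by
    intro y hy
    obtain ⟨y1, y2, y3, y4⟩ := hgeo y hy
    obtain ⟨L, hJ, hL'⟩ := hNr.jet y y4
    have hpr : ∀ τ : ℝ, 0 < τ + 0 → _ := fun τ hτ =>
      profile (p := p) (k := 0) (τ := τ) (μ := 1) (e := 0) hβ hβ1 hβp one_pos hτ
    have J1 := (Jet.lin (x := y) ν 0).comp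
        (by
          have : ∀ᶠ τ in nhds (⟪ν, y - 0⟫ : ℝ), 0 < τ + 0 :=
            (isOpen_lt continuous_const (by fun_prop)).mem_nhds
              (show 0 < ⟪ν, y - 0⟫ + (0 : ℝ) by rw [sub_zero]; linarith)
          filter_upwards [this] with τ hτ
          exact (hpr τ hτ).1) (hpr _ (by rw [sub_zero]; linarith)).2
    have J2 := (hJ.sub J1)
    refine ⟨_, ?_, (J2.congr_val ?_ rfl).congr_fun ?_⟩
    · rw [hν, sub_zero, Real.one_rpow]
      have g1 := hNr.gr y y4 (by linarith) (by linarith) (by linarith)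
      have pw : ⟪ν, y⟫ ^ (-β) ≤ (2 : ℝ) := by
        have h1 : ⟪ν, y⟫ ^ (-β) ≤ ((1 : ℝ) / 2) ^ (-β) :=
          Real.rpow_le_rpow_of_nonpos (by norm_num) y1 (by linarith)
        have h2 : ((1 : ℝ) / 2) ^ (-β) ≤ ((1 : ℝ) / 2) ^ (-1 : ℝ) :=
          Real.rpow_le_rpow_of_exponent_ge (by norm_num) (by norm_num) (by linarith)
        have h3 : ((1 : ℝ) / 2) ^ (-1 : ℝ) = 2 := by rw [Real.rpow_neg_one]; norm_num
        linarith
      have pw0 : 0 < ⟪ν, y⟫ ^ (-β) := Real.rpow_pos_of_pos (by linarith) _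
      have g2 : ‖s ^ β • g (a + s • y)‖ ≤ 4 * C := by
        refine g1.trans ?_
        nlinarith
      have g3 := Real.rpow_le_rpow (norm_nonneg _) g2 (by linarith : 0 ≤ p)
      have g4 : 0 ≤ ‖s ^ β • g (a + s • y)‖ ^ p := by positivity
      have g5 : (β ^ β * ⟪ν, y⟫ ^ (-β)) ^ p ≤ (β ^ β * 2) ^ p :=
        Real.rpow_le_rpow (by positivity) (by gcongr) (by linarith)
      have g6 : 0 ≤ (β ^ β * ⟪ν, y⟫ ^ (-β)) ^ p := by positivity
      simp only [one_mul, add_zero, one_pow, mul_one, mul_zero]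
      rw [abs_le] at hL'
      rw [abs_lt, hN]
      constructor <;> linarith
    · simp
    · intro z
      simp
  have hest := grad_est (φ := fun y => s ^ (-(1 - β)) * w (a + s • y) - β ^ β / (1 - β) * ⟪ν, y⟫ ^ (1 - β))
    (x := ν) (ρ := θ) (S := 2 * η) (N := N) hθ0 (by positivity)
    (by
      apply ContinuousOn.sub
      · exact hNr.cont.mono fun y hy => subset_closure (hgeo y hy).2.2.2
      · apply Continuous.continuousOn
        apply Continuous.mul continuous_const
        exact (Real.continuous_rpow_const hq.le).comp (by fun_prop))
    (fun y hy => by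
      obtain ⟨y1, y2, y3, y4⟩ := hgeo y hy
      set ℓ : ℝ := ⟪ν, y⟫ with hℓ
      have hℓ0 : 0 < ℓ := by linarith
      have e1 := hline (s * ℓ) (by positivity) (by nlinarith) (ℓ⁻¹ • y)
        (by rw [inner_smul_right, ← hℓ, inv_mul_cancel₀ hℓ0.ne'])
        (by
          rw [norm_smul, norm_inv, Real.norm_of_nonneg hℓ0.le, inv_mul_le_iff₀ hℓ0]
          linarith)
      rw [smul_smul, mul_assoc, mul_inv_cancel₀ hℓ0.ne', mul_one, Real.mul_rpow hs.le hℓ0.le] at e1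
      have e2 : 0 < ℓ ^ (1 - β) := by positivity
      have e3 : ℓ ^ (1 - β) ≤ 2 := by
        calc ℓ ^ (1 - β) ≤ (2 : ℝ) ^ (1 - β) := Real.rpow_le_rpow hℓ0.le (by linarith) hq.le
          _ ≤ (2 : ℝ) ^ (1 : ℝ) := Real.rpow_le_rpow_of_exponent_le (by norm_num) (by linarith)
          _ = 2 := Real.rpow_one _
      have e4 : ℓ ^ (-(1 - β)) * ℓ ^ (1 - β) = 1 := by rw [← Real.rpow_add hℓ0]; simp
      have e5 : s ^ (-(1 - β)) * w (a + s • y) - β ^ β / (1 - β) * ℓ ^ (1 - β) =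
          ℓ ^ (1 - β) * (s ^ (-(1 - β)) * ℓ ^ (-(1 - β)) * w (a + s • y) - β ^ β / (1 - β)) := by
        linear_combination (-(s ^ (-(1 - β)) * w (a + s • y))) * e4
      rw [e5, abs_mul, abs_of_pos e2]
      calc _ ≤ 2 * η := mul_le_mul e3 e1 (abs_nonneg _) (by norm_num)
        _ = _ := rfl)
    (fun y hy => by
      obtain ⟨L, hL', hJ⟩ := hjet y hy
      exact ⟨_, L, hJ, hL'⟩)
    (hjet ν (mem_closedBall_self hθ0.le)).choose_spec.2
  rw [hνν, Real.one_rpow, mul_one, hη1] at hest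
  linarith

theorem stmt7 {n : ℕ} (hn : 1 ≤ n)
    -- the exponents and constants
    (p β cp dp : ℝ) (hp : 2 < p) (hβ : β = 1 / (p - 1))
    (hcp : cp = β ^ β / (1 - β)) (hdp : dp = β ^ β)
    -- the bounded domain Ω with C² boundary
    (Ω : Set (EuclideanSpace ℝ (Fin n))) (hΩo : IsOpen Ω) (hΩb : Bornology.IsBounded Ω) (hΩc2 : IsC2Boundary Ω)
    -- the distance to the boundary
    (δ : EuclideanSpace ℝ (Fin n) → ℝ) (hδ : ∀ x, δ x = infDist x (frontier Ω))
    -- δ₀ and the boundary neighborhood Ωδ = {x ∈ Ω : δ(x) < δ₀}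
    (δ₀ : ℝ) (hδ₀ : 0 < δ₀)
    (Ωδ : Set (EuclideanSpace ℝ (Fin n))) (hΩδ : Ωδ = {x ∈ Ω | δ x < δ₀})
    -- δ is C² on Ωδ
    (hδC2 : ContDiffOn ℝ 2 δ Ωδ)
    -- every x ∈ Ωδ has a unique nearest boundary point P x
    (P : EuclideanSpace ℝ (Fin n) → EuclideanSpace ℝ (Fin n))
    (hP : ∀ x ∈ Ωδ, P x ∈ frontier Ω ∧ dist x (P x) = δ x ∧
      ∀ b ∈ frontier Ω, dist x b = δ x → b = P x)
    -- interior sphere condition of radius δ₀ at every boundary point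
    (hsph : ∀ b ∈ frontier Ω, ∃ y, ball y δ₀ ⊆ Ω ∧ dist y b = δ₀)
    -- the inward unit normal field ν
    (ν : EuclideanSpace ℝ (Fin n) → EuclideanSpace ℝ (Fin n))
    (hν1 : ∀ b ∈ frontier Ω, ‖ν b‖ = 1 ∧
      ∀ s ∈ Ioo (0 : ℝ) δ₀, b + s • ν b ∈ Ω ∧ δ (b + s • ν b) = s)
    (hν2 : ∀ x ∈ Ωδ, ν x = ν (P x) ∧ HasGradientAt δ (ν x) x)
    -- the solution u on [0,T], with spatial gradient G, spatial Hessian H and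
    -- time derivative u'
    (T : ℝ) (hT : 0 < T)
    (u : EuclideanSpace ℝ (Fin n) → ℝ → ℝ)
    (G : EuclideanSpace ℝ (Fin n) → ℝ → EuclideanSpace ℝ (Fin n))
    (H : EuclideanSpace ℝ (Fin n) → ℝ → (EuclideanSpace ℝ (Fin n) →L[ℝ] EuclideanSpace ℝ (Fin n)))
    (u' : EuclideanSpace ℝ (Fin n) → ℝ → ℝ)
    -- u is continuous on Ω̄ × [0,T] and vanishes on ∂Ω × [0,T]
    (hu_cont : ContinuousOn (fun q : EuclideanSpace ℝ (Fin n) × ℝ => u q.1 q.2) (closure Ω ×ˢ Icc 0 T))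
    (hu_bd : ∀ b ∈ frontier Ω, ∀ t ∈ Icc (0 : ℝ) T, u b t = 0)
    -- u is continuously differentiable in x on Ω̄ × [0,T), with spatial gradient G
    (hG : ∀ t ∈ Ico (0 : ℝ) T, ∀ x ∈ closure Ω,
      HasGradientWithinAt (fun y => u y t) (G x t) (closure Ω) x)
    (hG_cont : ContinuousOn (fun q : EuclideanSpace ℝ (Fin n) × ℝ => G q.1 q.2) (closure Ω ×ˢ Ico 0 T))
    -- on Ω × (0,T], u has spatial gradient G, spatial Hessian H and time derivative u',
    -- all continuous there
    (hG2 : ∀ t ∈ Ioc (0 : ℝ) T, ∀ x ∈ Ω, HasGradientAt (fun y => u y t) (G x t) x)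
    (hH : ∀ t ∈ Ioc (0 : ℝ) T, ∀ x ∈ Ω, HasFDerivAt (fun y => G y t) (H x t) x)
    (hu' : ∀ t ∈ Ioc (0 : ℝ) T, ∀ x ∈ Ω, HasDerivAt (fun s => u x s) (u' x t) t)
    (hreg : ContinuousOn (fun q : EuclideanSpace ℝ (Fin n) × ℝ =>
      (u q.1 q.2, G q.1 q.2, H q.1 q.2, u' q.1 q.2)) (Ω ×ˢ Ioc 0 T))
    -- the PDE uₜ - Δu = |∇u|^p on Ω × (0,T]
    (hPDE : ∀ t ∈ Ioc (0 : ℝ) T, ∀ x ∈ Ω,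
      u' x t - ∑ i : Fin n, ⟪H x t (EuclideanSpace.single i (1 : ℝ)),
        EuclideanSpace.single i (1 : ℝ)⟫ = ‖G x t‖ ^ p)
    -- a priori bounds: |uₜ| ≤ M on Ω × [T/2,T] and the Bernstein estimate
    (M : ℝ) (hM : ∀ x ∈ Ω, ∀ t ∈ Icc (T / 2) T, |u' x t| ≤ M)
    (C₀ : ℝ) (hC₀ : ∀ x ∈ Ω, ∀ t ∈ Ico (0 : ℝ) T, ‖G x t‖ ≤ C₀ * ((δ x) ^ (-β) + 1))
    -- a ∈ ∂Ω is a gradient blow-up point: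
    -- limsup of |∇u(x,t)| as t → T⁻, x → a equals ∞
    (a : EuclideanSpace ℝ (Fin n)) (ha : a ∈ frontier Ω)
    (hGBU : ∀ K : ℝ, ∀ η > 0, ∃ x ∈ Ω, ∃ t ∈ Ioo (T - η) T,
      0 < t ∧ dist x a < η ∧ K ≤ ‖G x t‖)
    :
    Tendsto (fun s : ℝ => s ^ β • G (a + s • ν a) T)
      (nhdsWithin 0 (Ioi 0)) (nhds (dp • ν a)) := by
  have hp1 : 0 < p - 1 := by linarith
  have hβ0 : 0 < β := by rw [hβ]; positivity
  have hβp : β * (p - 1) = 1 := by rw [hβ]; field_simp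
  have hβ1 : β < 1 := by
    rw [hβ, div_lt_one hp1]; linarith
  clear hβ
  subst hcp hdp
  obtain ⟨hνa, hνs⟩ := hν1 a ha
  have hns : ∀ s ∈ Ioo (0 : ℝ) δ₀, a + s • ν a ∈ Ω ∧
      infDist (a + s • ν a) (frontier Ω) = s := by
    intro s hs
    have := hνs s hs
    rwa [hδ] at this
  obtain ⟨r, Lm, h1, h2, h3⟩ := exists_defining hΩo hΩc2 ha hνa hδ₀ hns
  have hfl : FlatAt Ω a (ν a) := flatAt_of_defining hΩo hΩb ha hνa (h1.mono fun x hx => hx) h2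
  obtain ⟨C, hC, hS⟩ := sol_slices (p := p) hβ0 hβ1 hΩo ⟨a, ha⟩ hT hu_cont hu_bd hG2 hH hreg hPDE hM
    (fun x hx t ht => by have := hC₀ x hx t ht; rwa [hδ] at this)
  have hTT : T ∈ Icc (T / 2) T := ⟨by linarith, le_rfl⟩
  have hq : 0 < 1 - β := by linarith
  have hcp0 : 0 < β ^ β / (1 - β) := by positivity
  have hL : ∀ η > 0, ∃ s1 > 0, ∀ s : ℝ, 0 < s → s < s1 →
      β ^ β / (1 - β) - η ≤ s ^ (-(1 - β)) * u (a + s • ν a) T := by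
    intro η hη
    obtain ⟨s1, hs1, h⟩ := lower_bound (η := min (η / 3) (β ^ β / (1 - β) / 2)) hn hp hβ0 hβ1 hβp
      (le_max_right M 0) hC (by positivity)
      ((min_le_right _ _).trans_lt (by linarith)) hΩo ha hνa hfl h1 h2 h3 hT hu'
      (fun x hx t ht => (hM x hx t ht).trans (le_max_left _ _)) hS hGBU
    refine ⟨s1, hs1, fun s hs hs' => ?_⟩
    have e1 := h s hs hs'
    have e2 : min (η / 3) (β ^ β / (1 - β) / 2) ≤ η / 3 := min_le_left _ _
    linarith
  rw [Metric.tendsto_nhdsWithin_nhds]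
  intro ε hε
  obtain ⟨s1, hs1, h⟩ := final_profile hn hp hβ0 hβ1 hβp (le_max_right M 0) hC hΩo hνa hfl
    (hS T hTT) hL hε
  refine ⟨s1, hs1, fun s hs hs' => ?_⟩
  have hs0 : 0 < s := hs
  rw [dist_eq_norm]
  apply h s hs0
  rwa [Real.dist_eq, sub_zero, abs_of_pos hs0] at hs'
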